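/- arXiv:1809.06075 — 5 statements merged into one kernel-verified Lean document; each statement's English description precedes it below -/
import Mathlib

section
/- Suppose F : ℝ^N → ℝ is continuously differentiable and satisfies the Łojasiewicz inequality at every critical point: for every ξ̄ with ∇F(ξ̄) = 0 there exist an open neighborhood U(ξ̄) of ξ̄ and constants C > 0 and γ ∈ (0, 1/2] such that |F(ξ) − F(ξ̄)|^{1−γ} ≤ C |∇F(ξ)| for every ξ ∈ U(ξ̄). Let ξ : [0, ∞) → ℝ^N be a bounded solution of the gradient flow ξ'(t) = −∇F(ξ(t)). Then the limit ξ_∞ := lim_{t→∞} ξ(t) exists (and is a critical point of F), and there exist constants C' > 0 and c > 0 such that, with γ the Łojasiewicz exponent at ξ_∞, one has |ξ(t) − ξ_∞| ≤ C' t^{−γ/(1−2γ)} for all t ≥ 1 if γ < 1/2, and |ξ(t) − ξ_∞| ≤ C' e^{−c t} for all t ≥ 1 if γ = 1/2. -/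
open Filter Topology Set

section helpers
variable {E : Type*} [NormedAddCommGroup E] [InnerProductSpace ℝ E] [CompleteSpace E]

/-- Length bound on an interval. -/
lemma length_bound (ξ v : ℝ → E) (Φ Φ' : ℝ → ℝ) (s t : ℝ) (hst : s ≤ t)
    (hξ : ∀ u ∈ Icc s t, HasDerivAt ξ (v u) u)
    (hΦ : ∀ u ∈ Icc s t, HasDerivAt Φ (Φ' u) u)
    (hb : ∀ u ∈ Ico s t, ‖v u‖ ≤ -Φ' u) :
    ‖ξ t - ξ s‖ ≤ Φ s - Φ t := by
  have h := image_norm_le_of_norm_deriv_right_le_deriv_boundary' (f := fun u => ξ u - ξ s)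
    (f' := v) (a := s) (b := t) (B := fun u => Φ s - Φ u) (B' := fun u => -Φ' u)
    (fun u hu => ((hξ u hu).sub_const _).continuousAt.continuousWithinAt)
    (fun u hu => ((hξ u ⟨hu.1, hu.2.le⟩).sub_const _).hasDerivWithinAt)
    (by simp)
    (fun u hu => ((hΦ u hu).const_sub _).continuousAt.continuousWithinAt)
    (fun u hu => ((hΦ u ⟨hu.1, hu.2.le⟩).const_sub _).hasDerivWithinAt)
    hb
  exact h ⟨hst, le_rfl⟩

/-- Trapping lemma. -/
lemma trap (ξ v : ℝ → E) (Φ Φ' : ℝ → ℝ) (s : ℝ) (x : E) (r : ℝ)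
    (hξ : ∀ u, s ≤ u → HasDerivAt ξ (v u) u)
    (hΦ : ∀ u, s ≤ u → HasDerivAt Φ (Φ' u) u)
    (hpos : ∀ u, s ≤ u → 0 ≤ Φ u)
    (hb : ∀ u, s ≤ u → ‖ξ u - x‖ < r → ‖v u‖ ≤ -Φ' u)
    (hs : ‖ξ s - x‖ + Φ s < r) :
    ∀ t, s ≤ t → ‖ξ t - x‖ < r := by
  by_contra! hcon
  obtain ⟨t, hst, ht⟩ := hcon
  have hco : ContinuousOn (fun u => ‖ξ u - x‖) (Ici s) := fun u hu =>
    ((hξ u hu).continuousAt.sub continuousAt_const).norm.continuousWithinAt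
  have hcl : IsClosed (Ici s ∩ (fun u => ‖ξ u - x‖) ⁻¹' (Ici r)) :=
    hco.preimage_isClosed_of_isClosed isClosed_Ici isClosed_Ici
  have hbb : BddBelow (Ici s ∩ (fun u => ‖ξ u - x‖) ⁻¹' (Ici r)) := ⟨s, fun u hu => hu.1⟩
  have hmem := hcl.csInf_mem ⟨t, hst, ht⟩ hbb
  set T := sInf (Ici s ∩ (fun u => ‖ξ u - x‖) ⁻¹' (Ici r)) with hT
  have hsT : s ≤ T := hmem.1
  have hlt : ∀ u ∈ Ico s T, ‖ξ u - x‖ < r := by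
    intro u hu
    by_contra! hc
    exact absurd (csInf_le hbb ⟨hu.1, hc⟩) (not_le.mpr hu.2)
  have h1 := length_bound ξ v Φ Φ' s T hsT (fun u hu => hξ u hu.1) (fun u hu => hΦ u hu.1)
    (fun u hu => hb u hu.1 (hlt u hu))
  have h2 : r ≤ ‖ξ T - x‖ := hmem.2
  have h3 := norm_sub_le_norm_sub_add_norm_sub (ξ T) (ξ s) x
  have h4 := hpos T hsT
  linarith

lemma deriv_le_bound (y y' : ℝ → ℝ) (s k : ℝ)
    (hy : ∀ u, s ≤ u → HasDerivAt y (y' u) u) (hk : ∀ u, s ≤ u → y' u ≤ k) :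
    ∀ t, s ≤ t → y t ≤ y s + k * (t - s) := by
  intro t hst
  have h := image_le_of_deriv_right_le_deriv_boundary (f := y) (f' := y') (a := s) (b := t)
    (B := fun u => y s + k * (u - s)) (B' := fun _ => k)
    (fun u hu => (hy u hu.1).continuousAt.continuousWithinAt)
    (fun u hu => (hy u hu.1).hasDerivWithinAt) (by simp) (by fun_prop)
    (fun u hu => by
      have : HasDerivAt (fun u => y s + k * (u - s)) (k * 1) u :=
        (((hasDerivAt_id u).sub_const s).const_mul k).const_add _
      rw [mul_one] at this
      exact this.hasDerivWithinAt)
    (fun u hu => hk u hu.1)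
  exact h ⟨hst, le_rfl⟩

lemma decay_exp (y g : ℝ → ℝ) (s C : ℝ) (hC : 0 < C)
    (hy : ∀ u, s ≤ u → HasDerivAt y (-(g u) ^ 2) u) (hpos : ∀ u, s ≤ u → 0 < y u)
    (hb : ∀ u, s ≤ u → (y u) ^ (1 - (1 / 2 : ℝ)) ≤ C * g u) :
    ∃ A, 0 ≤ A ∧ ∀ t, s ≤ t → (y t) ^ (1 / 2 : ℝ) ≤ A * Real.exp (-((1 / (2 * C ^ 2)) * t)) := by
  have hd : ∀ u, s ≤ u → HasDerivAt (fun u => y u * Real.exp ((1 / C ^ 2) * u))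
      (-(g u) ^ 2 * Real.exp ((1 / C ^ 2) * u) +
        y u * (Real.exp ((1 / C ^ 2) * u) * ((1 / C ^ 2) * 1))) u := fun u hu =>
    (hy u hu).mul (((hasDerivAt_id u).const_mul (1 / C ^ 2)).exp)
  have hle : ∀ u, s ≤ u → -(g u) ^ 2 * Real.exp ((1 / C ^ 2) * u) +
        y u * (Real.exp ((1 / C ^ 2) * u) * ((1 / C ^ 2) * 1)) ≤ 0 := by
    intro u hu
    have h1 := hb u hu
    have h2 : y u ≤ (C * g u) ^ 2 := by
      have h3 : ((y u) ^ (1 - (1 / 2 : ℝ))) ^ 2 = y u := by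
        rw [← Real.rpow_natCast, ← Real.rpow_mul (hpos u hu).le]; norm_num
      rw [← h3]
      exact pow_le_pow_left₀ (Real.rpow_nonneg (hpos u hu).le _) h1 2
    have h4 : y u * (1 / C ^ 2) ≤ g u ^ 2 := by
      rw [mul_one_div, div_le_iff₀ (by positivity)]; nlinarith
    have := Real.exp_pos ((1 / C ^ 2) * u)
    nlinarith
  have hmain := deriv_le_bound _ _ s 0 hd hle
  refine ⟨(y s * Real.exp ((1 / C ^ 2) * s)) ^ (1 / 2 : ℝ), ?_, ?_⟩
  · have := hpos s le_rfl
    positivity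
  · intro t ht
    have h1 := hmain t ht
    simp only [zero_mul, add_zero] at h1
    have hpt := hpos t ht
    have hps := hpos s le_rfl
    have h2 : y t ≤ (y s * Real.exp ((1 / C ^ 2) * s)) * Real.exp (-((1 / C ^ 2) * t)) := by
      rw [Real.exp_neg, ← div_eq_mul_inv, le_div_iff₀ (Real.exp_pos _)]; exact h1
    have h3 := Real.rpow_le_rpow hpt.le h2 (by norm_num : (0 : ℝ) ≤ 1 / 2)
    rw [Real.mul_rpow (by positivity) (by positivity), ← Real.exp_mul] at h3
    convert h3 using 3
    field_simp

lemma decay_pow (y g : ℝ → ℝ) (s C γ : ℝ) (hs : 0 < s) (hC : 0 < C) (hγ : 0 < γ)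
    (hγ2 : γ < 1 / 2)
    (hy : ∀ u, s ≤ u → HasDerivAt y (-(g u) ^ 2) u) (hpos : ∀ u, s ≤ u → 0 < y u)
    (hb : ∀ u, s ≤ u → (y u) ^ (1 - γ) ≤ C * g u) :
    ∃ A, 0 ≤ A ∧ ∀ t, 2 * s ≤ t → (y t) ^ γ ≤ A * t ^ (-(γ / (1 - 2 * γ))) := by
  have hp : 0 < 1 - 2 * γ := by linarith
  set p := 1 - 2 * γ with hpdef
  have hd : ∀ u, s ≤ u → HasDerivAt (fun u => -(y u) ^ (-p))
      (-(-(g u) ^ 2 * (-p) * (y u) ^ (-p - 1))) u := fun u hu =>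
    ((hy u hu).rpow_const (Or.inl (hpos u hu).ne')).neg
  have hle : ∀ u, s ≤ u → -(-(g u) ^ 2 * (-p) * (y u) ^ (-p - 1)) ≤ -(p / C ^ 2) := by
    intro u hu
    have hyu := hpos u hu
    have h2 : (y u) ^ (2 * (1 - γ)) ≤ (C * g u) ^ 2 := by
      have h3 : ((y u) ^ (1 - γ)) ^ 2 = (y u) ^ (2 * (1 - γ)) := by
        rw [← Real.rpow_natCast, ← Real.rpow_mul hyu.le]; congr 1; push_cast; ring
      rw [← h3]
      exact pow_le_pow_left₀ (Real.rpow_nonneg hyu.le _) (hb u hu) 2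
    have h4 : (y u) ^ (2 * (1 - γ)) * (y u) ^ (-p - 1) = 1 := by
      rw [← Real.rpow_add hyu]
      have : 2 * (1 - γ) + (-p - 1) = 0 := by rw [hpdef]; ring
      rw [this, Real.rpow_zero]
    have hq : 0 < (y u) ^ (-p - 1) := Real.rpow_pos_of_pos hyu _
    have h5 : 1 ≤ (C * g u) ^ 2 * (y u) ^ (-p - 1) := by
      exact h4.symm.le.trans (mul_le_mul_of_nonneg_right h2 hq.le)
    have h6 : 1 / C ^ 2 ≤ g u ^ 2 * (y u) ^ (-p - 1) := by
      rw [div_le_iff₀ (by positivity)]; nlinarith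
    have h7 := mul_le_mul_of_nonneg_left h6 hp.le
    have h8 : p * (1 / C ^ 2) = p / C ^ 2 := by ring
    nlinarith
  have hmain := deriv_le_bound _ _ s (-(p / C ^ 2)) hd hle
  set κ := p / (2 * C ^ 2) with hκ
  have hκ0 : 0 < κ := by positivity
  refine ⟨κ ^ (-(γ / p)), by positivity, ?_⟩
  intro t ht
  have hst : s ≤ t := by linarith
  have ht0 : 0 < t := by linarith
  have hyt := hpos t hst
  have h1 := hmain t hst
  have h2 : 0 < (y s) ^ (-p) := Real.rpow_pos_of_pos (hpos s le_rfl) _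
  have h3 : κ * t ≤ (y t) ^ (-p) := by
    have : p / C ^ 2 = 2 * κ := by rw [hκ]; field_simp
    rw [this] at h1
    nlinarith
  have h4 := Real.rpow_le_rpow_of_nonpos (z := -(γ / p)) (by positivity : 0 < κ * t) h3
    (by have : 0 < γ / p := by positivity
        linarith)
  rw [← Real.rpow_mul hyt.le, Real.mul_rpow hκ0.le ht0.le] at h4
  have h5 : -p * -(γ / p) = γ := by field_simp
  rwa [h5] at h4

lemma globalize (f g : ℝ → ℝ) (D A T : ℝ) (hD : ∀ t, 1 ≤ t → f t ≤ D) (hA : 0 ≤ A)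
    (hg : ∀ t, 1 ≤ t → 0 < g t) (hanti : ∀ a b, 1 ≤ a → a ≤ b → g b ≤ g a)
    (hf : ∀ t, T ≤ t → f t ≤ A * g t) :
    ∃ C' > (0 : ℝ), ∀ t, 1 ≤ t → f t ≤ C' * g t := by
  set T' := max T 1
  have hT' : 1 ≤ T' := le_max_right _ _
  have hgT := hg T' hT'
  refine ⟨A + |D| / g T' + 1, by positivity, fun t ht => ?_⟩
  have hgt := hg t ht
  have hq : 0 ≤ |D| / g T' := by positivity
  rcases le_total T' t with h | h
  · have := hf t ((le_max_left _ _).trans h)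
    nlinarith
  · have h1 := hanti t T' ht h
    have h2 : |D| = |D| / g T' * g T' := by field_simp
    have h3 := hD t ht
    have h4 := le_abs_self D
    nlinarith [mul_le_mul_of_nonneg_left h1 hq, mul_nonneg hA hgt.le]

lemma grad_cont (F : E → ℝ) (hF : ContDiff ℝ 1 F) : Continuous (gradient F) := by
  unfold gradient
  exact (InnerProductSpace.toDual ℝ E).symm.continuous.comp (hF.continuous_fderiv (by norm_num))

lemma energy (F : E → ℝ) (hF : ContDiff ℝ 1 F) (ξ : ℝ → E) (t : ℝ)
    (h : HasDerivAt ξ (-gradient F (ξ t)) t) (L : ℝ) :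
    HasDerivAt (fun u => F (ξ u) - L) (-‖gradient F (ξ t)‖ ^ 2) t := by
  have h1 : HasGradientAt F (gradient F (ξ t)) (ξ t) :=
    ((hF.differentiable (by norm_num)) (ξ t)).hasGradientAt
  have h2 := (h1.hasFDerivAt.comp_hasDerivAt t h).sub_const L
  have h3 : (InnerProductSpace.toDual ℝ E (gradient F (ξ t))) (-gradient F (ξ t)) =
      -‖gradient F (ξ t)‖ ^ 2 := by
    rw [InnerProductSpace.toDual_apply_apply, inner_neg_right, real_inner_self_eq_norm_sq]
  rw [← h3]
  exact h2

/-- The Lojasiewicz desingularised energy controls the speed. -/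
lemma speed_bound (y g C γ : ℝ) (hy : 0 < y) (hg : 0 ≤ g) (hC : 0 < C) (hγ : 0 < γ)
    (hb : y ^ (1 - γ) ≤ C * g) :
    g ≤ -((C / γ) * (-g ^ 2 * γ * y ^ (γ - 1))) := by
  have h1 : y ^ (1 - γ) * y ^ (γ - 1) = 1 := by
    rw [← Real.rpow_add hy]; simp
  have hq : 0 < y ^ (γ - 1) := Real.rpow_pos_of_pos hy _
  have h2 : 1 ≤ C * g * y ^ (γ - 1) := by
    exact h1.symm.le.trans (mul_le_mul_of_nonneg_right hb hq.le)
  have h3 : -((C / γ) * (-g ^ 2 * γ * y ^ (γ - 1))) = g * (C * g * y ^ (γ - 1)) := by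
    field_simp
  rw [h3]
  nlinarith

end helpers



/-- **Łojasiewicz decay-rate condition for gradient flows in ℝ^N.**
If `F : ℝ^N → ℝ` is `C¹` and satisfies the Łojasiewicz inequality at every critical point,
then every bounded solution of the gradient flow `ξ' = -∇F(ξ)` on `[0, ∞)` converges to a
critical point `ξ∞`, with rate `t^(-γ/(1-2γ))` if the Łojasiewicz exponent `γ` at `ξ∞`
satisfies `γ < 1/2`, and exponential rate if `γ = 1/2`. -/
theorem loja_decay_rate_gradient_flow
    (N : ℕ) (F : EuclideanSpace ℝ (Fin N) → ℝ) (hF : ContDiff ℝ 1 F)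
    (hLoja : ∀ ξbar : EuclideanSpace ℝ (Fin N), gradient F ξbar = 0 →
      ∃ U : Set (EuclideanSpace ℝ (Fin N)), IsOpen U ∧ ξbar ∈ U ∧
        ∃ C > (0:ℝ), ∃ γ ∈ Ioc (0:ℝ) (1/2),
          ∀ ζ ∈ U, |F ζ - F ξbar| ^ (1 - γ) ≤ C * ‖gradient F ζ‖)
    (ξ : ℝ → EuclideanSpace ℝ (Fin N))
    (hcont : ContinuousOn ξ (Ici 0))
    (hode : ∀ t : ℝ, 0 < t → HasDerivAt ξ (-gradient F (ξ t)) t)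
    (hbdd : ∃ Kc : Set (EuclideanSpace ℝ (Fin N)), IsCompact Kc ∧ ∀ t : ℝ, 0 ≤ t → ξ t ∈ Kc) :
    ∃ ξinf : EuclideanSpace ℝ (Fin N),
      Tendsto ξ atTop (𝓝 ξinf) ∧ gradient F ξinf = 0 ∧
      ∀ (U : Set (EuclideanSpace ℝ (Fin N))) (C γ : ℝ),
        IsOpen U → ξinf ∈ U → 0 < C → γ ∈ Ioc (0:ℝ) (1/2) →
        (∀ ζ ∈ U, |F ζ - F ξinf| ^ (1 - γ) ≤ C * ‖gradient F ζ‖) →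
        ∃ C' > (0:ℝ), ∃ c > (0:ℝ),
          (γ < 1/2 → ∀ t : ℝ, 1 ≤ t → ‖ξ t - ξinf‖ ≤ C' * t ^ (-(γ / (1 - 2*γ)))) ∧
          (γ = 1/2 → ∀ t : ℝ, 1 ≤ t → ‖ξ t - ξinf‖ ≤ C' * Real.exp (-(c * t))) := by
  obtain ⟨Kc, hK, hKm⟩ := hbdd
  have hgc := grad_cont F hF
  obtain ⟨x, hxK, hx⟩ : ∃ x ∈ Kc, MapClusterPt x atTop ξ :=
    hK.exists_mapClusterPt (tendsto_principal.mpr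
      ((eventually_ge_atTop 0).mono fun t ht => hKm t ht))
  have hfreq : ∀ ε > 0, ∃ᶠ t in atTop, ‖ξ t - x‖ < ε := by
    intro ε hε
    have := hx.frequently (Metric.ball_mem_nhds x hε)
    simpa [Metric.mem_ball, dist_eq_norm] using this
  have hen : ∀ t, 0 < t → HasDerivAt (fun u => F (ξ u) - F x) (-‖gradient F (ξ t)‖ ^ 2) t :=
    fun t ht => energy F hF ξ t (hode t ht) _
  set y : ℝ → ℝ := fun u => F (ξ u) - F x with hydef
  have hmono : ∀ s t, 0 < s → s ≤ t → y t ≤ y s := by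
    intro s t hs hst
    have := deriv_le_bound y _ s 0 (fun u hu => hen u (hs.trans_le hu))
      (fun u _ => by nlinarith [sq_nonneg ‖gradient F (ξ u)‖]) t hst
    simpa using this
  have hyfreq : ∀ ε > 0, ∃ δ > 0, ∀ t, ‖ξ t - x‖ < δ → |y t| < ε := by
    intro ε hε
    obtain ⟨δ, hδ, h⟩ := Metric.continuous_iff.mp hF.continuous x ε hε
    refine ⟨δ, hδ, fun t ht => ?_⟩
    have := h (ξ t) (by rwa [dist_eq_norm])
    rwa [Real.dist_eq] at this
  have hy0 : ∀ t, 0 < t → 0 ≤ y t := by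
    intro t ht
    by_contra! hneg
    obtain ⟨δ, hδ, h⟩ := hyfreq (-y t) (by linarith)
    obtain ⟨s, hs1, hs2⟩ := ((hfreq δ hδ).and_eventually (eventually_ge_atTop t)).exists
    have h1 := h s hs1
    have h2 := hmono t s ht hs2
    have := neg_abs_le (y s)
    linarith
  obtain ⟨D, hD⟩ : ∃ D, ∀ t, 1 ≤ t → ‖ξ t - x‖ ≤ D := by
    obtain ⟨D, hD⟩ := hK.isBounded.exists_norm_le
    refine ⟨D + ‖x‖, fun t ht => (norm_sub_le _ _).trans ?_⟩
    have := hD _ (hKm t (by linarith))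
    linarith
  have hpowpos : ∀ α : ℝ, ∀ t : ℝ, 1 ≤ t → 0 < t ^ α := fun α t ht =>
    Real.rpow_pos_of_pos (by linarith) _
  have hpowanti : ∀ γ ∈ Ioc (0:ℝ) (1/2), γ < 1/2 → ∀ a b : ℝ, 1 ≤ a → a ≤ b →
      b ^ (-(γ / (1 - 2*γ))) ≤ a ^ (-(γ / (1 - 2*γ))) := by
    intro γ hγ hγ2 a b ha hab
    apply Real.rpow_le_rpow_of_nonpos (by linarith) hab
    have : 0 ≤ γ / (1 - 2*γ) := div_nonneg hγ.1.le (by linarith)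
    linarith
  have hexpanti : ∀ c : ℝ, 0 < c → ∀ a b : ℝ, 1 ≤ a → a ≤ b →
      Real.exp (-(c * b)) ≤ Real.exp (-(c * a)) := by
    intro c hc a b _ hab
    apply Real.exp_le_exp.mpr
    nlinarith
  by_cases hA : ∃ t0, 0 < t0 ∧ y t0 = 0
  ·
    obtain ⟨t0, ht0, hyt0⟩ := hA
    have hyz : ∀ t, t0 ≤ t → y t = 0 := fun t ht =>
      le_antisymm (hyt0 ▸ hmono t0 t ht0 ht) (hy0 t (ht0.trans_le ht))
    have hgz : ∀ t, t0 < t → gradient F (ξ t) = 0 := by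
      intro t ht
      have h1 := hen t (ht0.trans ht)
      have h2 : HasDerivAt y 0 t := (hasDerivAt_const t (0:ℝ)).congr_of_eventuallyEq
        ((eventually_gt_nhds ht).mono fun u hu => hyz u hu.le)
      have h3 := h1.unique h2
      have h4 : ‖gradient F (ξ t)‖ ^ 2 = 0 := by linarith
      exact norm_eq_zero.mp (pow_eq_zero_iff (two_ne_zero) |>.mp h4)
    have hconst : ∀ t, t0 + 1 ≤ t → ξ t = ξ (t0 + 1) := by
      intro t ht
      have := length_bound ξ (fun u => -gradient F (ξ u)) (fun _ => 0) (fun _ => 0) (t0+1) t ht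
        (fun u hu => hode u (by linarith [hu.1])) (fun u _ => hasDerivAt_const u 0)
        (fun u hu => by rw [hgz u (by linarith [hu.1])]; simp)
      simp only [sub_zero] at this
      exact sub_eq_zero.mp (norm_le_zero_iff.mp this)
    have hxe : ξ (t0 + 1) = x := by
      by_contra hne
      have hp : 0 < ‖ξ (t0 + 1) - x‖ := norm_pos_iff.mpr (sub_ne_zero.mpr hne)
      obtain ⟨s, hs1, hs2⟩ :=
        ((hfreq _ hp).and_eventually (eventually_ge_atTop (t0 + 1))).exists
      rw [hconst s hs2] at hs1
      exact lt_irrefl _ hs1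
    have hz : ∀ t, t0 + 1 ≤ t → ‖ξ t - x‖ = 0 := fun t ht => by
      rw [hconst t ht, hxe]; simp
    refine ⟨x, ?_, ?_, ?_⟩
    · refine tendsto_const_nhds.congr' ?_
      filter_upwards [eventually_ge_atTop (t0 + 1)] with t ht
      rw [hconst t ht, hxe]
    · rw [← hxe]; exact hgz _ (by linarith)
    · intro U C γ hU hxU hC hγ hloj
      rcases lt_or_eq_of_le hγ.2 with hlt | heq
      · obtain ⟨C', hC', h⟩ := globalize (fun t => ‖ξ t - x‖) (fun t => t ^ (-(γ / (1 - 2*γ))))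
          D 0 (t0 + 1) hD le_rfl (hpowpos _) (hpowanti γ hγ hlt)
          (fun t ht => by simp [hz t ht])
        exact ⟨C', hC', 1, one_pos, fun _ => h, fun h' => absurd h' hlt.ne⟩
      · obtain ⟨C', hC', h⟩ := globalize (fun t => ‖ξ t - x‖) (fun t => Real.exp (-(1 * t)))
          D 0 (t0 + 1) hD le_rfl (fun t _ => Real.exp_pos _) (hexpanti 1 one_pos)
          (fun t ht => by simp [hz t ht])
        exact ⟨C', hC', 1, one_pos, fun h' => absurd heq h'.ne, fun _ => h⟩
  · push Not at hA
    have hyp : ∀ t, 0 < t → 0 < y t := fun t ht => lt_of_le_of_ne (hy0 t ht) (hA t ht).symm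
    have hcrit : gradient F x = 0 := by
      by_contra hne
      have hp : 0 < ‖gradient F x‖ := norm_pos_iff.mpr hne
      set m := ‖gradient F x‖ / 2 with hm
      have hm0 : 0 < m := by positivity
      obtain ⟨r, hr, hball⟩ : ∃ r > 0, ∀ z, ‖z - x‖ < r → m < ‖gradient F z‖ := by
        have : ∀ᶠ z in 𝓝 x, m < ‖gradient F z‖ :=
          hgc.norm.continuousAt.eventually_const_lt (by rw [hm]; linarith)
        obtain ⟨r, hr, h⟩ := Metric.eventually_nhds_iff.mp this
        exact ⟨r, hr, fun z hz => h (by rwa [dist_eq_norm])⟩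
      obtain ⟨δ, hδ, h⟩ := hyfreq (m * (r / 2)) (by positivity)
      obtain ⟨s, hs1, hs2⟩ := ((hfreq (min δ (r / 2)) (by positivity)).and_eventually
        (eventually_gt_atTop 0)).exists
      have hys := (le_abs_self _).trans_lt (h s (hs1.trans_le (min_le_left _ _)))
      have hxs := hs1.trans_le (min_le_right _ _)
      have htrap := trap ξ (fun u => -gradient F (ξ u)) (fun u => 1 / m * y u)
        (fun u => 1 / m * (-‖gradient F (ξ u)‖ ^ 2)) s x r
        (fun u hu => hode u (hs2.trans_le hu))
        (fun u hu => (hen u (hs2.trans_le hu)).const_mul _)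
        (fun u hu => mul_nonneg (by positivity) (hy0 u (hs2.trans_le hu)))
        (fun u hu hu2 => by
          have h1 := hball _ hu2
          rw [norm_neg, mul_neg, neg_neg, one_div_mul_eq_div, le_div_iff₀ hm0]
          nlinarith)
        (by
          have : 1 / m * y s < r / 2 := by
            rw [one_div_mul_eq_div, div_lt_iff₀ hm0]; linarith
          linarith)
      have hdec := deriv_le_bound y _ s (-m ^ 2) (fun u hu => hen u (hs2.trans_le hu))
        (fun u hu => by
          have := hball _ (htrap u hu)
          nlinarith)
      have h1 := hdec (s + y s / m ^ 2) (by
        have := hyp s hs2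
        have : 0 < y s / m ^ 2 := by positivity
        linarith)
      have h2 := hyp (s + y s / m ^ 2) (by
        have := hyp s hs2
        positivity)
      have h3 : y s + -m ^ 2 * (s + y s / m ^ 2 - s) = 0 := by field_simp; ring
      linarith
    have hΦ : ∀ C γ : ℝ, ∀ u, 0 < u → HasDerivAt (fun u => (C / γ) * (y u) ^ γ)
        ((C / γ) * (-‖gradient F (ξ u)‖ ^ 2 * γ * (y u) ^ (γ - 1))) u := fun C γ u hu =>
      ((hen u hu).rpow_const (Or.inl (hyp u hu).ne')).const_mul _
    have hlim : Tendsto ξ atTop (𝓝 x) := by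
      obtain ⟨U, hU, hxU, C, hC, γ, hγ, hloj⟩ := hLoja x hcrit
      obtain ⟨r, hr, hrU⟩ := Metric.isOpen_iff.mp hU x hxU
      rw [Metric.tendsto_atTop]
      intro ε hε
      set ρ := min ε r with hρ
      have hρ0 : 0 < ρ := by positivity
      have hγ0 := hγ.1
      set η := (γ / C * (ρ / 2)) ^ (1 / γ) with hη
      have hη0 : 0 < η := by positivity
      obtain ⟨δ, hδ, h⟩ := hyfreq η hη0
      obtain ⟨s, hs1, hs2⟩ := ((hfreq (min δ (ρ / 2)) (by positivity)).and_eventually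
        (eventually_gt_atTop 0)).exists
      have hys := (le_abs_self _).trans_lt (h s (hs1.trans_le (min_le_left _ _)))
      have hxs := hs1.trans_le (min_le_right _ _)
      have htrap := trap ξ (fun u => -gradient F (ξ u)) (fun u => (C / γ) * (y u) ^ γ)
        _ s x ρ
        (fun u hu => hode u (hs2.trans_le hu))
        (fun u hu => hΦ C γ u (hs2.trans_le hu))
        (fun u hu => mul_nonneg (by positivity) (Real.rpow_nonneg (hy0 u (hs2.trans_le hu)) _))
        (fun u hu hu2 => by
          rw [norm_neg]
          have hyu := hyp u (hs2.trans_le hu)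
          refine speed_bound (y u) _ C γ hyu (norm_nonneg _) hC hγ0 ?_
          have := hloj (ξ u) (hrU (by
            rw [Metric.mem_ball, dist_eq_norm]; exact hu2.trans_le (min_le_right _ _)))
          rwa [abs_of_pos hyu] at this)
        (by
          have h1 : (y s) ^ γ < γ / C * (ρ / 2) := by
            have := Real.rpow_lt_rpow (hy0 s hs2) hys hγ0
            rwa [hη, ← Real.rpow_mul (by positivity), one_div_mul_cancel hγ0.ne',
              Real.rpow_one] at this
          have h2 : (C / γ) * (y s) ^ γ < (C / γ) * (γ / C * (ρ / 2)) :=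
            mul_lt_mul_of_pos_left h1 (by positivity)
          have h3 : (C / γ) * (γ / C * (ρ / 2)) = ρ / 2 := by field_simp
          linarith)
      exact ⟨s, fun t ht => by
        rw [dist_eq_norm]; exact (htrap t ht).trans_le (min_le_left _ _)⟩
    refine ⟨x, hlim, hcrit, ?_⟩
    intro U C γ hU hxU hC hγ hloj
    have hγ0 := hγ.1
    obtain ⟨s, hs⟩ := eventually_atTop.mp
      ((hlim.eventually (hU.mem_nhds hxU)).and (eventually_ge_atTop 1))
    have hs0 : 0 < s := by linarith [(hs s le_rfl).2]
    have hb : ∀ u, s ≤ u → (y u) ^ (1 - γ) ≤ C * ‖gradient F (ξ u)‖ := by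
      intro u hu
      have := hloj (ξ u) (hs u hu).1
      rwa [abs_of_pos (hyp u (hs0.trans_le hu))] at this
    have hdist : ∀ t, s ≤ t → ‖ξ t - x‖ ≤ (C / γ) * (y t) ^ γ := by
      intro t ht
      have h1 : Tendsto (fun u => ‖ξ u - ξ t‖) atTop (𝓝 ‖x - ξ t‖) :=
        (hlim.sub_const _).norm
      rw [norm_sub_rev]
      refine le_of_tendsto h1 ?_
      filter_upwards [eventually_ge_atTop t] with u hu
      have h2 := length_bound ξ (fun u => -gradient F (ξ u)) (fun u => (C / γ) * (y u) ^ γ)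
        _ t u hu
        (fun w hw => hode w (hs0.trans_le (ht.trans hw.1)))
        (fun w hw => hΦ C γ w (hs0.trans_le (ht.trans hw.1)))
        (fun w hw => by
          rw [norm_neg]
          exact speed_bound (y w) _ C γ (hyp w (hs0.trans_le (ht.trans hw.1))) (norm_nonneg _)
            hC hγ0 (hb w (ht.trans hw.1)))
      have h3 : 0 ≤ (C / γ) * (y u) ^ γ := mul_nonneg (by positivity)
        (Real.rpow_nonneg (hy0 u (hs0.trans_le (ht.trans hu))) _)
      linarith
    rcases lt_or_eq_of_le hγ.2 with hlt | heq
    · obtain ⟨A, hA0, hAd⟩ := decay_pow y (fun u => ‖gradient F (ξ u)‖) s C γ hs0 hC hγ0 hlt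
        (fun u hu => hen u (hs0.trans_le hu)) (fun u hu => hyp u (hs0.trans_le hu)) hb
      obtain ⟨C', hC', h⟩ := globalize (fun t => ‖ξ t - x‖) (fun t => t ^ (-(γ / (1 - 2*γ))))
        D (C / γ * A) (2 * s) hD (by positivity) (hpowpos _) (hpowanti γ hγ hlt)
        (fun t ht => by
          have h1 := hdist t (by linarith)
          have h2 := mul_le_mul_of_nonneg_left (hAd t ht) (by positivity : 0 ≤ C / γ)
          simp only [mul_assoc]
          exact h1.trans h2)
      exact ⟨C', hC', 1, one_pos, fun _ => h, fun h' => absurd h' hlt.ne⟩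
    · subst heq
      obtain ⟨A, hA0, hAd⟩ := decay_exp y (fun u => ‖gradient F (ξ u)‖) s C hC
        (fun u hu => hen u (hs0.trans_le hu)) (fun u hu => hyp u (hs0.trans_le hu)) hb
      have hc : 0 < 1 / (2 * C ^ 2) := by positivity
      obtain ⟨C', hC', h⟩ := globalize (fun t => ‖ξ t - x‖)
        (fun t => Real.exp (-((1 / (2 * C ^ 2)) * t)))
        D (C / (1/2) * A) s hD (by positivity) (fun t _ => Real.exp_pos _) (hexpanti _ hc)
        (fun t ht => by
          have h1 := hdist t ht
          have h2 := mul_le_mul_of_nonneg_left (hAd t ht) (by positivity : 0 ≤ C / (1/2))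
          rw [← mul_assoc] at h2
          exact h1.trans h2)
      exact ⟨C', hC', _, hc, fun h' => absurd h' (lt_irrefl _), fun _ => h⟩
end

section
/- There is a constant C > 0, depending only on the dimension d, such that the following holds. Let u be of class C² on the closed unit ball closure(B₁) ⊂ ℝ^d, and let h be of class C¹ on closure(B₁), harmonic in B₁ (Δh = 0 in B₁), with h = u on ∂B₁. Then ∫_{B₁} |∇u|² dx − ∫_{B₁} |∇h|² dx ≤ C ∫_{B₁} |Δu|² dx. -/
open MeasureTheory

/-- The Laplacian of `u : ℝ^d → ℝ`, as the sum of the pure second derivatives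
in the coordinate directions (junk value where `u` is not twice differentiable). -/
noncomputable def lapl {d : ℕ} (u : EuclideanSpace ℝ (Fin d) → ℝ)
    (x : EuclideanSpace ℝ (Fin d)) : ℝ :=
  ∑ i : Fin d, iteratedFDeriv ℝ 2 u x ![EuclideanSpace.single i 1, EuclideanSpace.single i 1]


open Filter Topology in
lemma loja_cutoff (d : ℕ) : ∃ K : ℝ, ∃ ψ : ℕ → EuclideanSpace ℝ (Fin d) → ℝ,
    (∀ n, ContDiff ℝ 1 (ψ n)) ∧ (∀ n, ∃ r < (1:ℝ), ∀ x, r < ‖x‖ ^ 2 → ψ n x = 0) ∧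
    (∀ n x, |ψ n x| ≤ 1) ∧
    (∀ n x v, ‖x‖ < 1 → (1 - ‖x‖ ^ 2) * |fderiv ℝ (ψ n) x v| ≤ K * ‖v‖) ∧
    (∀ x, ‖x‖ < 1 → ∀ᶠ n in atTop, ψ n =ᶠ[𝓝 x] fun _ => 1) := by
  have hst : ContDiff ℝ 1 Real.smoothTransition := Real.smoothTransition.contDiff (n := 1)
  obtain ⟨K, hK⟩ : ∃ K, ∀ s : ℝ, ‖(s + 1) * deriv Real.smoothTransition s‖ ≤ K := by
    apply HasCompactSupport.exists_bound_of_continuous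
    · apply HasCompactSupport.intro (K := Set.Icc 0 1) isCompact_Icc
      intro s hs
      have : deriv Real.smoothTransition s = 0 := by
        rcases lt_or_ge s 0 with h | h
        · have : Real.smoothTransition =ᶠ[𝓝 s] fun _ => 0 := by
            filter_upwards [Iio_mem_nhds h] with t ht
            exact Real.smoothTransition.zero_of_nonpos (le_of_lt ht)
          rw [this.deriv_eq]; simp
        · have h1 : 1 < s := by
            by_contra h2
            exact hs ⟨h, not_lt.mp h2⟩
          have : Real.smoothTransition =ᶠ[𝓝 s] fun _ => 1 := by
            filter_upwards [Ioi_mem_nhds h1] with t ht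
            exact Real.smoothTransition.one_of_one_le (le_of_lt ht)
          rw [this.deriv_eq]; simp
      rw [this, mul_zero]
    · exact (continuous_id.add continuous_const).mul (hst.continuous_deriv le_rfl)
  have hin : ∀ n : ℕ, ContDiff ℝ 1 (fun x : EuclideanSpace ℝ (Fin d) =>
      ((n:ℝ) + 1) * (1 - ‖x‖ ^ 2) - 1) := fun n =>
    (contDiff_const.mul (contDiff_const.sub (contDiff_norm_sq ℝ))).sub contDiff_const
  refine ⟨2 * K, fun n x => Real.smoothTransition (((n:ℝ) + 1) * (1 - ‖x‖ ^ 2) - 1),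
    fun n => hst.comp (hin n), ?_, ?_, ?_, ?_⟩
  · intro n
    have hn : (0:ℝ) < n + 1 := by positivity
    refine ⟨n / (n + 1), by rw [div_lt_one hn]; linarith, fun x hx => ?_⟩
    apply Real.smoothTransition.zero_of_nonpos
    rw [div_lt_iff₀ hn] at hx
    nlinarith
  · intro n x
    rw [abs_of_nonneg (Real.smoothTransition.nonneg _)]
    exact Real.smoothTransition.le_one _
  · intro n x v hx
    set s := ((n:ℝ) + 1) * (1 - ‖x‖ ^ 2) - 1 with hs
    have h1 : HasFDerivAt (fun x : EuclideanSpace ℝ (Fin d) =>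
      ((n:ℝ) + 1) * (1 - ‖x‖ ^ 2) - 1) (((n:ℝ) + 1) •
      (-(2 • (innerSL ℝ x : EuclideanSpace ℝ (Fin d) →L[ℝ] ℝ)) :
        EuclideanSpace ℝ (Fin d) →L[ℝ] ℝ)) x := by
      have := ((((hasStrictFDerivAt_norm_sq x).hasFDerivAt).const_sub 1).const_mul
        ((n:ℝ)+1)).sub_const 1
      exact this
    have h2 : HasDerivAt Real.smoothTransition (deriv Real.smoothTransition s) s :=
      (hst.differentiable one_ne_zero s).hasDerivAt
    have h3 := h2.comp_hasFDerivAt x h1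
    have h4 : fderiv ℝ (fun x : EuclideanSpace ℝ (Fin d) =>
        Real.smoothTransition (((n:ℝ) + 1) * (1 - ‖x‖ ^ 2) - 1)) x v
        = deriv Real.smoothTransition s * (((n:ℝ)+1) * (-(2 * inner ℝ x v))) := by
      have h5 := h3.fderiv
      simp only [Function.comp_def] at h5
      rw [h5]
      simp
    rw [h4]
    have h0 : 0 ≤ 1 - ‖x‖ ^ 2 := by nlinarith [norm_nonneg x]
    rw [← abs_of_nonneg h0, ← abs_mul]
    have : (1 - ‖x‖ ^ 2) * (deriv Real.smoothTransition s * (((n:ℝ)+1) * (-(2 * inner ℝ x v))))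
      = ((s + 1) * deriv Real.smoothTransition s) * (-(2 * inner ℝ x v)) := by rw [hs]; ring
    rw [this, abs_mul, abs_neg, abs_mul (2:ℝ), abs_two]
    have hi : |inner ℝ x v| ≤ ‖v‖ := (abs_real_inner_le_norm x v).trans
      (by nlinarith [norm_nonneg v])
    have hKs := hK s
    rw [Real.norm_eq_abs] at hKs
    calc _ ≤ K * (2 * ‖v‖) := by gcongr; exact (abs_nonneg _).trans hKs
      _ = _ := by ring
  · intro x hx
    obtain ⟨ρ, h1, h2⟩ := exists_between hx
    have hρ : 0 < 1 - ρ ^ 2 := by nlinarith [norm_nonneg x]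
    obtain ⟨N, hN⟩ := exists_nat_gt (2 / (1 - ρ ^ 2))
    filter_upwards [eventually_ge_atTop N] with n hn
    have hb : ∀ᶠ y in 𝓝 x, ‖y‖ < ρ := continuous_norm.continuousAt.eventually_lt_const h1
    filter_upwards [hb] with y hy
    apply Real.smoothTransition.one_of_one_le
    rw [div_lt_iff₀ hρ] at hN
    have hn' : (N:ℝ) ≤ n := by exact_mod_cast hn
    have h3 : 1 - ρ ^ 2 ≤ 1 - ‖y‖ ^ 2 := by nlinarith [norm_nonneg y]
    nlinarith [mul_le_mul hn' h3 hρ.le (Nat.cast_nonneg n)]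

lemma loja_ibp_cut {d : ℕ} (w ψ : EuclideanSpace ℝ (Fin d) → ℝ)
    (F : Fin d → EuclideanSpace ℝ (Fin d) → ℝ)
    (hw : ContDiffOn ℝ 1 w (Metric.ball 0 1)) (hF : ∀ i, ContDiffOn ℝ 1 (F i) (Metric.ball 0 1))
    (hψ : ContDiff ℝ 1 ψ) (hψ0 : ∃ r < (1:ℝ), ∀ x, r < ‖x‖ ^ 2 → ψ x = 0) :
    ∫ x in Metric.ball (0 : EuclideanSpace ℝ (Fin d)) 1,
      (ψ x * (∑ i, fderiv ℝ w x (EuclideanSpace.single i 1) * F i x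
        + w x * ∑ i, fderiv ℝ (F i) x (EuclideanSpace.single i 1))
        + w x * ∑ i, fderiv ℝ ψ x (EuclideanSpace.single i 1) * F i x) = 0 := by
  obtain ⟨r, hr, hψ0⟩ := hψ0
  let G : Fin d → EuclideanSpace ℝ (Fin d) → ℝ := fun i x => ψ x * (w x * F i x)
  have hev : ∀ x : EuclideanSpace ℝ (Fin d), x ∉ Metric.ball 0 1 →
      ∀ i, G i =ᶠ[nhds x] fun _ => 0 := by
    intro x hx i
    have hx1 : r < ‖x‖ ^ 2 := by
      simp only [Metric.mem_ball, dist_zero_right, not_lt] at hx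
      nlinarith
    have hb : ∀ᶠ y in nhds x, r < ‖y‖ ^ 2 :=
      (continuous_norm.pow 2).continuousAt.eventually_const_lt hx1
    filter_upwards [hb] with y hy
    simp [G, hψ0 y hy]
  have hG : ∀ i, ContDiff ℝ 1 (G i) := by
    intro i
    rw [contDiff_iff_contDiffAt]
    intro x
    by_cases hx : x ∈ Metric.ball (0 : EuclideanSpace ℝ (Fin d)) 1
    · have hn := Metric.isOpen_ball.mem_nhds hx
      exact hψ.contDiffAt.mul ((hw.contDiffAt hn).mul ((hF i).contDiffAt hn))
    · exact contDiffAt_const.congr_of_eventuallyEq (hev x hx i)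
  have hGs : ∀ i, HasCompactSupport (G i) := by
    intro i
    apply HasCompactSupport.intro (isCompact_closedBall (0 : EuclideanSpace ℝ (Fin d)) 1)
    intro x hx
    exact (hev x (fun h => hx (Metric.ball_subset_closedBall h)) i).eq_of_nhds
  have hc' : ∀ i, Continuous (fun x => fderiv ℝ (G i) x (EuclideanSpace.single i 1)) :=
    fun i => ((hG i).continuous_fderiv one_ne_zero).clm_apply continuous_const
  have hGint : ∀ i, Integrable (fun x => fderiv ℝ (G i) x (EuclideanSpace.single i 1)) := by
    intro i
    refine (hc' i).integrable_of_hasCompactSupport ?_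
    exact ((hGs i).fderiv_apply (𝕜 := ℝ) _)
  have hz : ∀ i, ∫ x, fderiv ℝ (G i) x (EuclideanSpace.single i 1) = 0 := by
    intro i
    have := integral_mul_fderiv_eq_neg_fderiv_mul_of_integrable (μ := volume) (f := fun _ => (1:ℝ))
      (g := G i) (v := EuclideanSpace.single i 1) (by simp) (by simpa using hGint i)
      (by simpa using (hG i).continuous.integrable_of_hasCompactSupport (hGs i))
      (fun x _ => by fun_prop) (fun x _ => (hG i).differentiable one_ne_zero x)
    simpa using this
  have hzs : ∫ x, ∑ i, fderiv ℝ (G i) x (EuclideanSpace.single i 1) = 0 := by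
    rw [integral_finsetSum _ (fun i _ => hGint i)]
    simp [hz]
  rw [← setIntegral_eq_integral_of_forall_compl_eq_zero
    (s := Metric.ball (0 : EuclideanSpace ℝ (Fin d)) 1)] at hzs
  · rw [← hzs]
    refine setIntegral_congr_fun measurableSet_ball fun x hx => ?_
    have hn := Metric.isOpen_ball.mem_nhds hx
    have dψ := (hψ.differentiable one_ne_zero x).hasFDerivAt
    have dw := ((hw.contDiffAt hn).differentiableAt one_ne_zero).hasFDerivAt
    have dF := fun i => (((hF i).contDiffAt hn).differentiableAt one_ne_zero).hasFDerivAt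
    have hd : ∀ i, fderiv ℝ (G i) x (EuclideanSpace.single i 1) =
        ψ x * (fderiv ℝ w x (EuclideanSpace.single i 1) * F i x
        + w x * fderiv ℝ (F i) x (EuclideanSpace.single i 1))
        + w x * (fderiv ℝ ψ x (EuclideanSpace.single i 1) * F i x) := by
      intro i
      have := (dψ.mul (dw.mul (dF i))).fderiv
      have h2 : fderiv ℝ (G i) x = _ := this
      rw [h2]
      simp
      ring
    simp only [hd]
    rw [Finset.sum_add_distrib, ← Finset.mul_sum, ← Finset.mul_sum, Finset.sum_add_distrib,
      ← Finset.mul_sum]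
  · intro x hx
    refine Finset.sum_eq_zero fun i _ => ?_
    rw [(hev x hx i).fderiv_eq]
    simp

lemma loja_ibp {d : ℕ} (w g : EuclideanSpace ℝ (Fin d) → ℝ)
    (F : Fin d → EuclideanSpace ℝ (Fin d) → ℝ)
    (hw : ContDiffOn ℝ 1 w (Metric.ball 0 1)) (hF : ∀ i, ContDiffOn ℝ 1 (F i) (Metric.ball 0 1))
    (hg : ContinuousOn g (Metric.ball 0 1))
    (hdiv : ∀ x ∈ Metric.ball (0 : EuclideanSpace ℝ (Fin d)) 1,
      ∑ i, fderiv ℝ (F i) x (EuclideanSpace.single i 1) = g x)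
    (L M : ℝ)
    (hwL : ∀ x ∈ Metric.ball (0 : EuclideanSpace ℝ (Fin d)) 1, |w x| ≤ L * (1 - ‖x‖ ^ 2))
    (hFM : ∀ i, ∀ x ∈ Metric.ball (0 : EuclideanSpace ℝ (Fin d)) 1, |F i x| ≤ M)
    (hwM : ∀ i, ∀ x ∈ Metric.ball (0 : EuclideanSpace ℝ (Fin d)) 1,
      |fderiv ℝ w x (EuclideanSpace.single i 1)| ≤ M)
    (hgM : ∀ x ∈ Metric.ball (0 : EuclideanSpace ℝ (Fin d)) 1, |g x| ≤ M) :
    ∫ x in Metric.ball (0 : EuclideanSpace ℝ (Fin d)) 1,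
      (∑ i, fderiv ℝ w x (EuclideanSpace.single i 1) * F i x + w x * g x) = 0 := by
  obtain ⟨K, ψ, hψ, hψ0, hψ1, hψK, hψe⟩ := loja_cutoff d
  have hM : 0 ≤ M := (abs_nonneg _).trans (hgM 0 (by simp))
  have hL : 0 ≤ L := by simpa using (abs_nonneg _).trans (hwL 0 (by simp))
  have hwc := hw.fderiv_of_isOpen (m := 0) Metric.isOpen_ball (by norm_num)
  have hlim := tendsto_integral_of_dominated_convergence
    (μ := volume.restrict (Metric.ball (0 : EuclideanSpace ℝ (Fin d)) 1))
    (F := fun n x => ψ n x * (∑ i, fderiv ℝ w x (EuclideanSpace.single i 1) * F i x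
        + w x * g x)
        + w x * ∑ i, fderiv ℝ (ψ n) x (EuclideanSpace.single i 1) * F i x)
    (f := fun x => ∑ i, fderiv ℝ w x (EuclideanSpace.single i 1) * F i x + w x * g x)
    (fun _ => (d * (M * M) + L * M) + L * (d * (K * M)))
    ?_ ?_ ?_ ?_
  · refine tendsto_nhds_unique hlim ?_
    refine Filter.Tendsto.congr (f₁ := fun _ => 0) (fun n => ?_) tendsto_const_nhds
    rw [← loja_ibp_cut w (ψ n) F hw hF (hψ n) (hψ0 n)]
    refine setIntegral_congr_fun measurableSet_ball fun x hx => ?_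
    simp only [hdiv x hx]
  · intro n
    refine ContinuousOn.aestronglyMeasurable ?_ measurableSet_ball
    have c1 := (hψ n).continuous.continuousOn (s := Metric.ball (0 : EuclideanSpace ℝ (Fin d)) 1)
    have c2 := ((hψ n).continuous_fderiv one_ne_zero).continuousOn
      (s := Metric.ball (0 : EuclideanSpace ℝ (Fin d)) 1)
    have c3 := hwc.continuousOn
    have c4 := hw.continuousOn
    have c5 := fun i => (hF i).continuousOn
    fun_prop
  · have : IsFiniteMeasure (volume.restrict (Metric.ball (0 : EuclideanSpace ℝ (Fin d)) 1)) :=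
      ⟨by rw [Measure.restrict_apply_univ]; exact measure_ball_lt_top⟩
    exact integrable_const _
  · intro n
    filter_upwards [ae_restrict_mem measurableSet_ball] with x hx
    have hx1 : ‖x‖ < 1 := by simpa using hx
    have h0 : 0 ≤ 1 - ‖x‖ ^ 2 := by nlinarith [norm_nonneg x]
    have hwL' : |w x| ≤ L := (hwL x hx).trans (by nlinarith [sq_nonneg ‖x‖])
    rw [Real.norm_eq_abs]
    refine (abs_add_le _ _).trans (add_le_add ?_ ?_)
    · rw [abs_mul]
      refine (mul_le_of_le_one_left (abs_nonneg _) (hψ1 n x)).trans ?_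
      refine (abs_add_le _ _).trans (add_le_add ?_ ?_)
      · refine (Finset.abs_sum_le_sum_abs _ _).trans ?_
        refine (Finset.sum_le_card_nsmul _ _ (M * M) fun i _ => ?_).trans (by simp)
        rw [abs_mul]
        exact mul_le_mul (hwM i x hx) (hFM i x hx) (abs_nonneg _) hM
      · rw [abs_mul]
        exact mul_le_mul hwL' (hgM x hx) (abs_nonneg _) hL
    · rw [abs_mul]
      have hsum : (1 - ‖x‖ ^ 2) * |∑ i, fderiv ℝ (ψ n) x (EuclideanSpace.single i 1) * F i x|
          ≤ d * (K * M) := by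
        refine (mul_le_mul_of_nonneg_left (Finset.abs_sum_le_sum_abs _ _) h0).trans ?_
        rw [Finset.mul_sum]
        refine (Finset.sum_le_card_nsmul _ _ (K * M) fun i _ => ?_).trans (by simp)
        rw [abs_mul, ← mul_assoc]
        have := hψK n x (EuclideanSpace.single i 1) hx1
        simp only [PiLp.norm_single, norm_one, mul_one] at this
        exact mul_le_mul this (hFM i x hx) (abs_nonneg _)
          ((mul_nonneg h0 (abs_nonneg _)).trans this)
      calc _ ≤ L * (1 - ‖x‖ ^ 2) * _ := mul_le_mul_of_nonneg_right (hwL x hx) (abs_nonneg _)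
        _ = L * ((1 - ‖x‖ ^ 2) * _) := by ring
        _ ≤ _ := mul_le_mul_of_nonneg_left hsum hL
  · filter_upwards [ae_restrict_mem measurableSet_ball] with x hx
    have hx1 : ‖x‖ < 1 := by simpa using hx
    refine tendsto_const_nhds.congr' ?_
    filter_upwards [hψe x hx1] with n hn
    rw [hn.fderiv_eq, hn.eq_of_nhds]
    simp

lemma loja_bdd {d : ℕ} (u : EuclideanSpace ℝ (Fin d) → ℝ)
    (hu : ContDiffOn ℝ 1 u (Metric.closedBall 0 1)) :
    ∃ M, (∀ x ∈ Metric.closedBall (0 : EuclideanSpace ℝ (Fin d)) 1,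
      ‖fderivWithin ℝ u (Metric.closedBall 0 1) x‖ ≤ M) ∧
      ∀ x ∈ Metric.ball (0 : EuclideanSpace ℝ (Fin d)) 1, ‖fderiv ℝ u x‖ ≤ M := by
  have hU : UniqueDiffOn ℝ (Metric.closedBall (0 : EuclideanSpace ℝ (Fin d)) 1) :=
    uniqueDiffOn_convex (convex_closedBall _ _)
      ⟨0, Metric.ball_subset_interior_closedBall (by simp)⟩
  obtain ⟨M, hM⟩ := (isCompact_closedBall (0 : EuclideanSpace ℝ (Fin d)) 1).exists_bound_of_continuousOn
    (hu.continuousOn_fderivWithin hU le_rfl)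
  refine ⟨M, hM, fun x hx => ?_⟩
  rw [← fderivWithin_of_mem_nhds (s := Metric.closedBall 0 1)
    (Filter.mem_of_superset (Metric.isOpen_ball.mem_nhds hx) Metric.ball_subset_closedBall)]
  exact hM x (Metric.ball_subset_closedBall hx)

lemma loja_lapl_bdd {d : ℕ} (u : EuclideanSpace ℝ (Fin d) → ℝ)
    (hu : ContDiffOn ℝ 2 u (Metric.closedBall 0 1)) :
    ∃ M, ∀ x ∈ Metric.ball (0 : EuclideanSpace ℝ (Fin d)) 1, |lapl u x| ≤ M := by
  have hU : UniqueDiffOn ℝ (Metric.closedBall (0 : EuclideanSpace ℝ (Fin d)) 1) :=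
    uniqueDiffOn_convex (convex_closedBall _ _)
      ⟨0, Metric.ball_subset_interior_closedBall (by simp)⟩
  obtain ⟨M, hM⟩ := (isCompact_closedBall (0 : EuclideanSpace ℝ (Fin d)) 1).exists_bound_of_continuousOn
    (hu.continuousOn_iteratedFDerivWithin (m := 2) le_rfl hU)
  refine ⟨d * M, fun x hx => ?_⟩
  have h1 : ‖iteratedFDeriv ℝ 2 u x‖ ≤ M := by
    rw [← iteratedFDerivWithin_eq_iteratedFDeriv hU (hu.contDiffAt (Filter.mem_of_superset
      (Metric.isOpen_ball.mem_nhds hx) Metric.ball_subset_closedBall))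
      (Metric.ball_subset_closedBall hx)]
    exact hM x (Metric.ball_subset_closedBall hx)
  refine (Finset.abs_sum_le_sum_abs _ _).trans ?_
  refine (Finset.sum_le_card_nsmul _ _ M fun i _ => ?_).trans (by simp)
  have := (iteratedFDeriv ℝ 2 u x).le_opNorm
    ![EuclideanSpace.single i 1, EuclideanSpace.single i 1]
  rw [Real.norm_eq_abs] at this
  simp [Fin.prod_univ_two] at this
  linarith

lemma loja_lapl_eq {d : ℕ} (u : EuclideanSpace ℝ (Fin d) → ℝ)
    (hu : ContDiffOn ℝ 2 u (Metric.ball 0 1)) (x : EuclideanSpace ℝ (Fin d))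
    (hx : x ∈ Metric.ball 0 1) :
    ∑ i, fderiv ℝ (fun y => fderiv ℝ u y (EuclideanSpace.single i 1)) x
      (EuclideanSpace.single i 1) = lapl u x := by
  unfold lapl
  refine Finset.sum_congr rfl fun i _ => ?_
  have h1 := hu.fderiv_of_isOpen (m := 1) Metric.isOpen_ball (by norm_num)
  have h2 := (h1.contDiffAt (Metric.isOpen_ball.mem_nhds hx)).differentiableAt one_ne_zero
  rw [iteratedFDeriv_two_apply, fderiv_clm_apply h2 (by fun_prop)]
  simp

lemma loja_lapl_cont {d : ℕ} (u : EuclideanSpace ℝ (Fin d) → ℝ)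
    (hu : ContDiffOn ℝ 2 u (Metric.ball 0 1)) :
    ContinuousOn (lapl u) (Metric.ball 0 1) := by
  have h1 := hu.fderiv_of_isOpen (m := 1) Metric.isOpen_ball (by norm_num)
  have h2 := (h1.fderiv_of_isOpen (m := 0) Metric.isOpen_ball (by norm_num)).continuousOn
  unfold lapl
  simp only [iteratedFDeriv_two_apply]
  fun_prop

lemma loja_grad {d : ℕ} (u : EuclideanSpace ℝ (Fin d) → ℝ) (x : EuclideanSpace ℝ (Fin d)) :
    ‖gradient u x‖ ^ 2 = ∑ i, (fderiv ℝ u x (EuclideanSpace.single i 1)) ^ 2 := by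
  rw [EuclideanSpace.real_norm_sq_eq]
  refine Finset.sum_congr rfl fun i _ => ?_
  congr 1
  have : inner ℝ (gradient u x) (EuclideanSpace.single i 1) =
      fderiv ℝ u x (EuclideanSpace.single i 1) := by
    simp only [gradient, InnerProductSpace.toDual_symm_apply]
  rw [← this, EuclideanSpace.inner_single_right]
  simp

lemma loja_integrable {d : ℕ} (f : EuclideanSpace ℝ (Fin d) → ℝ)
    (hf : ContinuousOn f (Metric.ball 0 1)) (M : ℝ)
    (hM : ∀ x ∈ Metric.ball (0 : EuclideanSpace ℝ (Fin d)) 1, |f x| ≤ M) :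
    IntegrableOn f (Metric.ball 0 1) := by
  have : IsFiniteMeasure (volume.restrict (Metric.ball (0 : EuclideanSpace ℝ (Fin d)) 1)) :=
    ⟨by rw [Measure.restrict_apply_univ]; exact measure_ball_lt_top⟩
  refine Integrable.of_bound (hf.aestronglyMeasurable measurableSet_ball) M ?_
  filter_upwards [ae_restrict_mem measurableSet_ball] with x hx
  exact hM x hx

lemma loja_vanish {d : ℕ} (hd : 1 ≤ d) (w : EuclideanSpace ℝ (Fin d) → ℝ)
    (hw : ContDiffOn ℝ 1 w (Metric.closedBall 0 1))
    (h0 : ∀ x ∈ Metric.sphere (0 : EuclideanSpace ℝ (Fin d)) 1, w x = 0) :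
    ∃ L, 0 ≤ L ∧
      ∀ x ∈ Metric.ball (0 : EuclideanSpace ℝ (Fin d)) 1, |w x| ≤ L * (1 - ‖x‖ ^ 2) := by
  obtain ⟨M, hM, -⟩ := loja_bdd w hw
  have hM0 : 0 ≤ M := (norm_nonneg _).trans (hM 0 (by simp))
  refine ⟨M, hM0, fun x hx => ?_⟩
  have hx1 : ‖x‖ < 1 := by simpa using hx
  obtain ⟨y, hy, hxy⟩ : ∃ y : EuclideanSpace ℝ (Fin d), ‖y‖ = 1 ∧ ‖x - y‖ ≤ 1 - ‖x‖ := by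
    by_cases hx0 : x = 0
    · exact ⟨EuclideanSpace.single ⟨0, hd⟩ 1, by simp, by simp [hx0]⟩
    · have hn : 0 < ‖x‖ := norm_pos_iff.mpr hx0
      refine ⟨‖x‖⁻¹ • x, by rw [norm_smul]; simp [hn.ne'], ?_⟩
      have : x - ‖x‖⁻¹ • x = (1 - ‖x‖⁻¹) • x := by rw [sub_smul, one_smul]
      rw [this, norm_smul, Real.norm_eq_abs, abs_of_nonpos]
      · apply le_of_eq; field_simp; ring
      · have := (one_lt_inv₀ hn).mpr hx1
        linarith
  have := (convex_closedBall (0 : EuclideanSpace ℝ (Fin d)) 1).norm_image_sub_le_of_norm_fderivWithin_le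
    (𝕜 := ℝ) (hw.differentiableOn one_ne_zero) hM
    (x := y) (y := x) (by simp [hy]) (Metric.ball_subset_closedBall hx)
  rw [h0 y (by simpa using hy), sub_zero, Real.norm_eq_abs] at this
  refine this.trans (mul_le_mul_of_nonneg_left ?_ hM0)
  nlinarith [norm_nonneg x]

lemma loja_poincare {d : ℕ} (hd : 1 ≤ d) (w : EuclideanSpace ℝ (Fin d) → ℝ)
    (hw : ContDiffOn ℝ 1 w (Metric.ball 0 1)) (L M : ℝ)
    (hwL : ∀ x ∈ Metric.ball (0 : EuclideanSpace ℝ (Fin d)) 1, |w x| ≤ L * (1 - ‖x‖ ^ 2))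
    (hwM : ∀ x ∈ Metric.ball (0 : EuclideanSpace ℝ (Fin d)) 1, ‖fderiv ℝ w x‖ ≤ M) :
    ∫ x in Metric.ball (0 : EuclideanSpace ℝ (Fin d)) 1, w x ^ 2 ≤
      4 * ∫ x in Metric.ball (0 : EuclideanSpace ℝ (Fin d)) 1,
        ∑ i, (fderiv ℝ w x (EuclideanSpace.single i 1)) ^ 2 := by
  have hM : 0 ≤ M := (norm_nonneg _).trans (hwM 0 (by simp))
  have hL : 0 ≤ L := by simpa using (abs_nonneg _).trans (hwL 0 (by simp))
  have hwL' : ∀ x ∈ Metric.ball (0 : EuclideanSpace ℝ (Fin d)) 1, |w x| ≤ L := fun x hx =>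
    (hwL x hx).trans (by nlinarith [sq_nonneg ‖x‖])
  have hwi : ∀ i, ∀ x ∈ Metric.ball (0 : EuclideanSpace ℝ (Fin d)) 1,
      |fderiv ℝ w x (EuclideanSpace.single i 1)| ≤ M := by
    intro i x hx
    have := (fderiv ℝ w x).le_of_opNorm_le (hwM x hx) (EuclideanSpace.single i 1)
    simpa using this
  have hxi : ∀ i, ∀ x ∈ Metric.ball (0 : EuclideanSpace ℝ (Fin d)) 1, |x i| ≤ 1 := by
    intro i x hx
    have hx1 : ‖x‖ < 1 := by simpa using hx
    exact (PiLp.norm_apply_le x i).trans hx1.le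
  have hc := hw.continuousOn
  have hc' := (hw.fderiv_of_isOpen (m := 0) Metric.isOpen_ball (by norm_num)).continuousOn
  have hcx : ∀ i : Fin d, ContDiff ℝ 1 (fun x : EuclideanSpace ℝ (Fin d) => x i) := by
    intro i; fun_prop
  have hcx' : ∀ i : Fin d, Continuous (fun x : EuclideanSpace ℝ (Fin d) => x i) :=
    fun i => (hcx i).continuous
  have hsumb : ∀ x ∈ Metric.ball (0 : EuclideanSpace ℝ (Fin d)) 1,
      |∑ i, fderiv ℝ w x (EuclideanSpace.single i 1) * x i| ≤ d * M := by
    intro x hx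
    refine (Finset.abs_sum_le_sum_abs _ _).trans ?_
    refine (Finset.sum_le_card_nsmul _ _ M fun i _ => ?_).trans (by simp)
    rw [abs_mul]
    calc _ ≤ M * 1 := mul_le_mul (hwi i x hx) (hxi i x hx) (abs_nonneg _) hM
      _ = M := mul_one M
  have key := loja_ibp w
    (fun x => d * w x + ∑ i, fderiv ℝ w x (EuclideanSpace.single i 1) * x i)
    (fun i x => w x * x i) hw (fun i => hw.mul (hcx i).contDiffOn) (by fun_prop) ?_ L
    (M + L + (d * L + d * M)) hwL ?_ ?_ ?_
  · have hi1 : IntegrableOn (fun x => w x ^ 2) (Metric.ball 0 1) :=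
      loja_integrable _ (by fun_prop) (L ^ 2) fun x hx => by
        rw [abs_pow]; exact pow_le_pow_left₀ (abs_nonneg _) (hwL' x hx) 2
    have hi2 : IntegrableOn (fun x => ∑ i, (fderiv ℝ w x (EuclideanSpace.single i 1)) ^ 2)
        (Metric.ball 0 1) := by
      refine loja_integrable _ (by fun_prop) (d * M ^ 2) fun x hx => ?_
      refine (Finset.abs_sum_le_sum_abs _ _).trans ?_
      refine (Finset.sum_le_card_nsmul _ _ (M ^ 2) fun i _ => ?_).trans (by simp)
      rw [abs_pow]; exact pow_le_pow_left₀ (abs_nonneg _) (hwi i x hx) 2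
    have hmono : ∫ x in Metric.ball (0 : EuclideanSpace ℝ (Fin d)) 1,
        ((1/2) * w x ^ 2 - 2 * ∑ i, (fderiv ℝ w x (EuclideanSpace.single i 1)) ^ 2) ≤
        ∫ x in Metric.ball (0 : EuclideanSpace ℝ (Fin d)) 1,
        (∑ i, fderiv ℝ w x (EuclideanSpace.single i 1) * (w x * x i) + w x *
        (d * w x + ∑ i, fderiv ℝ w x (EuclideanSpace.single i 1) * x i)) := by
      refine setIntegral_mono_on ((hi1.const_mul _).sub (hi2.const_mul _)) ?_ measurableSet_ball ?_
      · refine loja_integrable _ (by fun_prop) (L * (d * M) + L * (d * L + d * M)) fun x hx => ?_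
        have e : ∑ i, fderiv ℝ w x (EuclideanSpace.single i 1) * (w x * x i)
          = w x * ∑ i, fderiv ℝ w x (EuclideanSpace.single i 1) * x i := by
          rw [Finset.mul_sum]; exact Finset.sum_congr rfl fun i _ => by ring
        rw [e]
        refine (abs_add_le _ _).trans (add_le_add ?_ ?_)
        · rw [abs_mul]; exact mul_le_mul (hwL' x hx) (hsumb x hx) (abs_nonneg _) hL
        · rw [abs_mul]
          refine mul_le_mul (hwL' x hx) ((abs_add_le _ _).trans (add_le_add ?_ (hsumb x hx)))
            (abs_nonneg _) hL
          rw [abs_mul, Nat.abs_cast]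
          exact mul_le_mul_of_nonneg_left (hwL' x hx) (Nat.cast_nonneg d)
      · intro x hx
        have e : ∑ i, fderiv ℝ w x (EuclideanSpace.single i 1) * (w x * x i)
          = w x * ∑ i, fderiv ℝ w x (EuclideanSpace.single i 1) * x i := by
          rw [Finset.mul_sum]; exact Finset.sum_congr rfl fun i _ => by ring
        rw [e]
        have cs := Finset.sum_mul_sq_le_sq_mul_sq Finset.univ
          (fun i => fderiv ℝ w x (EuclideanSpace.single i 1)) (fun i => x i)
        have hx1 : ‖x‖ < 1 := by simpa using hx
        rw [← EuclideanSpace.real_norm_sq_eq] at cs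
        set S := ∑ i, fderiv ℝ w x (EuclideanSpace.single i 1) * x i
        set D := ∑ i, (fderiv ℝ w x (EuclideanSpace.single i 1)) ^ 2
        have hD : 0 ≤ D := Finset.sum_nonneg fun i _ => sq_nonneg _
        have hS : S ^ 2 ≤ D := cs.trans (mul_le_of_le_one_right hD (by nlinarith [norm_nonneg x]))
        have hd' : (1:ℝ) ≤ d := by exact_mod_cast hd
        nlinarith [sq_nonneg (w x + 2 * S), mul_le_mul_of_nonneg_right hd' (sq_nonneg (w x))]
    rw [key, integral_sub (hi1.const_mul _) (hi2.const_mul _), integral_const_mul,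
      integral_const_mul] at hmono
    linarith
  · intro x hx
    have dw := ((hw.contDiffAt (Metric.isOpen_ball.mem_nhds hx)).differentiableAt
      one_ne_zero).hasFDerivAt
    have : ∀ i, fderiv ℝ (fun x => w x * x i) x (EuclideanSpace.single i 1) =
        w x + fderiv ℝ w x (EuclideanSpace.single i 1) * x i := by
      intro i
      have dx : HasFDerivAt (fun x : EuclideanSpace ℝ (Fin d) => x i)
        (EuclideanSpace.proj i : EuclideanSpace ℝ (Fin d) →L[ℝ] ℝ) x :=
        (EuclideanSpace.proj i : EuclideanSpace ℝ (Fin d) →L[ℝ] ℝ).hasFDerivAt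
      have h2 : fderiv ℝ (fun x => w x * x i) x = _ := (dw.mul dx).fderiv
      rw [h2]
      simp
      ring
    simp only [this, Finset.sum_add_distrib]
    simp
  · intro i x hx
    rw [abs_mul]
    have := mul_le_mul (hwL' x hx) (hxi i x hx) (abs_nonneg _) hL
    have : 0 ≤ (d:ℝ) * L := by positivity
    have : 0 ≤ (d:ℝ) * M := by positivity
    linarith
  · intro i x hx
    have := hwi i x hx
    have : 0 ≤ (d:ℝ) * L := by positivity
    have : 0 ≤ (d:ℝ) * M := by positivity
    linarith
  · intro x hx
    have h1 := abs_add_le ((d:ℝ) * w x) (∑ i, fderiv ℝ w x (EuclideanSpace.single i 1) * x i)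
    have h2 := hsumb x hx
    rw [abs_mul, Nat.abs_cast] at h1
    have := mul_le_mul_of_nonneg_left (hwL' x hx) (Nat.cast_nonneg (α := ℝ) d)
    linarith

/-- **Łojasiewicz inequality (exponent 1/2) for the Dirichlet energy.**
There is `C > 0`, depending only on `d`, such that for every `u` of class `C²` on the
closed unit ball and every `h` of class `C¹` on the closed unit ball, harmonic in the open
ball, with `h = u` on the boundary sphere, one has
`∫_{B₁} |∇u|² - ∫_{B₁} |∇h|² ≤ C ∫_{B₁} |Δu|²`. -/
theorem loja_dirichlet_energy (d : ℕ) (hd : 1 ≤ d) :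
    ∃ C > (0:ℝ), ∀ u h : EuclideanSpace ℝ (Fin d) → ℝ,
      ContDiffOn ℝ 2 u (Metric.closedBall (0 : EuclideanSpace ℝ (Fin d)) 1) →
      ContDiffOn ℝ 1 h (Metric.closedBall (0 : EuclideanSpace ℝ (Fin d)) 1) →
      ContDiffOn ℝ 2 h (Metric.ball (0 : EuclideanSpace ℝ (Fin d)) 1) →
      (∀ x ∈ Metric.ball (0 : EuclideanSpace ℝ (Fin d)) 1, lapl h x = 0) →
      (∀ x ∈ Metric.sphere (0 : EuclideanSpace ℝ (Fin d)) 1, h x = u x) →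
      (∫ x in Metric.ball (0 : EuclideanSpace ℝ (Fin d)) 1, ‖gradient u x‖ ^ 2)
          - (∫ x in Metric.ball (0 : EuclideanSpace ℝ (Fin d)) 1, ‖gradient h x‖ ^ 2)
        ≤ C * ∫ x in Metric.ball (0 : EuclideanSpace ℝ (Fin d)) 1, (lapl u x) ^ 2 := by
  refine ⟨4, by norm_num, fun u h hu hh1 hh2 hΔ hb => ?_⟩
  have hu1 : ContDiffOn ℝ 1 u (Metric.closedBall 0 1) := hu.of_le (by norm_num)
  have hu2 : ContDiffOn ℝ 2 u (Metric.ball 0 1) := hu.mono Metric.ball_subset_closedBall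
  have hwc : ContDiffOn ℝ 1 (fun x => u x - h x) (Metric.closedBall 0 1) := hu1.sub hh1
  have hw : ContDiffOn ℝ 1 (fun x => u x - h x) (Metric.ball 0 1) :=
    hwc.mono Metric.ball_subset_closedBall
  obtain ⟨L, hL, hwL⟩ := loja_vanish hd _ hwc (fun x hx => by rw [hb x hx, sub_self])
  obtain ⟨Mu, -, hMu⟩ := loja_bdd u hu1
  obtain ⟨Mh, -, hMh⟩ := loja_bdd h hh1
  obtain ⟨Ml, hMl⟩ := loja_lapl_bdd u hu
  have hP := loja_poincare hd (fun x => u x - h x) hw L (Mu + Mh) hwL ?_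
  swap
  · intro x hx
    have hn := Metric.isOpen_ball.mem_nhds hx
    rw [fderiv_fun_sub ((hu2.contDiffAt hn).differentiableAt two_ne_zero)
      ((hh2.contDiffAt hn).differentiableAt two_ne_zero)]
    exact (norm_sub_le _ _).trans (add_le_add (hMu x hx) (hMh x hx))
  have hfd : ∀ x ∈ Metric.ball (0 : EuclideanSpace ℝ (Fin d)) 1,
      ∀ v, fderiv ℝ (fun x => u x - h x) x v = fderiv ℝ u x v - fderiv ℝ h x v := by
    intro x hx v
    have hn := Metric.isOpen_ball.mem_nhds hx
    rw [fderiv_fun_sub ((hu2.contDiffAt hn).differentiableAt two_ne_zero)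
      ((hh2.contDiffAt hn).differentiableAt two_ne_zero)]
    rfl
  have hui : ∀ i, ∀ x ∈ Metric.ball (0 : EuclideanSpace ℝ (Fin d)) 1,
      |fderiv ℝ u x (EuclideanSpace.single i 1)| ≤ Mu := by
    intro i x hx
    simpa using (fderiv ℝ u x).le_of_opNorm_le (hMu x hx) (EuclideanSpace.single i 1)
  have hhi : ∀ i, ∀ x ∈ Metric.ball (0 : EuclideanSpace ℝ (Fin d)) 1,
      |fderiv ℝ h x (EuclideanSpace.single i 1)| ≤ Mh := by
    intro i x hx
    simpa using (fderiv ℝ h x).le_of_opNorm_le (hMh x hx) (EuclideanSpace.single i 1)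
  have hMu0 : 0 ≤ Mu := (norm_nonneg _).trans (hMu 0 (by simp))
  have hMh0 : 0 ≤ Mh := (norm_nonneg _).trans (hMh 0 (by simp))
  have hMl0 : 0 ≤ Ml := (abs_nonneg _).trans (hMl 0 (by simp))
  have hwi : ∀ i, ∀ x ∈ Metric.ball (0 : EuclideanSpace ℝ (Fin d)) 1,
      |fderiv ℝ (fun x => u x - h x) x (EuclideanSpace.single i 1)| ≤ Mu + Mh + Ml := by
    intro i x hx
    rw [hfd x hx]
    have := abs_sub (fderiv ℝ u x (EuclideanSpace.single i 1))
      (fderiv ℝ h x (EuclideanSpace.single i 1))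
    linarith [hui i x hx, hhi i x hx]
  have cu1 := hu2.fderiv_of_isOpen (m := 1) Metric.isOpen_ball (by norm_num)
  have ch1 := hh2.fderiv_of_isOpen (m := 1) Metric.isOpen_ball (by norm_num)
  have cu0 := cu1.continuousOn
  have ch0 := ch1.continuousOn
  have cu := hu2.continuousOn
  have ch := hh2.continuousOn
  have cl := loja_lapl_cont u hu2
  have Iu := loja_ibp (fun x => u x - h x) (lapl u)
    (fun i x => fderiv ℝ u x (EuclideanSpace.single i 1)) hw
    (fun i => cu1.clm_apply contDiffOn_const) cl (loja_lapl_eq u hu2) L (Mu + Mh + Ml) hwL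
    (fun i x hx => (hui i x hx).trans (by linarith)) hwi
    (fun x hx => (hMl x hx).trans (by linarith))
  have Ih := loja_ibp (fun x => u x - h x) (fun _ => 0)
    (fun i x => fderiv ℝ h x (EuclideanSpace.single i 1)) hw
    (fun i => ch1.clm_apply contDiffOn_const) continuousOn_const
    (fun x hx => (loja_lapl_eq h hh2 x hx).trans (hΔ x hx)) L (Mu + Mh + Ml) hwL
    (fun i x hx => (hhi i x hx).trans (by linarith)) hwi
    (fun x hx => by simp; linarith)
  have hsq : ∀ (F : Fin d → EuclideanSpace ℝ (Fin d) → ℝ) (G : Fin d → EuclideanSpace ℝ (Fin d) → ℝ)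
      (A B : ℝ), (∀ i, ContinuousOn (F i) (Metric.ball 0 1)) →
      (∀ i, ContinuousOn (G i) (Metric.ball 0 1)) →
      (∀ i, ∀ x ∈ Metric.ball (0 : EuclideanSpace ℝ (Fin d)) 1, |F i x| ≤ A) →
      (∀ i, ∀ x ∈ Metric.ball (0 : EuclideanSpace ℝ (Fin d)) 1, |G i x| ≤ B) →
      IntegrableOn (fun x => ∑ i, F i x * G i x) (Metric.ball 0 1) := by
    intro F G A B cF cG hF hG
    refine loja_integrable _ (by fun_prop) (d * (A * B)) fun x hx => ?_
    refine (Finset.abs_sum_le_sum_abs _ _).trans ?_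
    refine (Finset.sum_le_card_nsmul _ _ (A * B) fun i _ => ?_).trans (by simp)
    rw [abs_mul]
    exact mul_le_mul (hF i x hx) (hG i x hx) (abs_nonneg _) ((abs_nonneg _).trans (hF i x hx))
  have cfu : ∀ i, ContinuousOn (fun x => fderiv ℝ u x (EuclideanSpace.single i 1))
    (Metric.ball 0 1) := fun i => by fun_prop
  have cfh : ∀ i, ContinuousOn (fun x => fderiv ℝ h x (EuclideanSpace.single i 1))
    (Metric.ball 0 1) := fun i => by fun_prop
  have iuu := hsq _ _ Mu Mu cfu cfu hui hui
  have iuh := hsq _ _ Mu Mh cfu cfh hui hhi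
  have ihh := hsq _ _ Mh Mh cfh cfh hhi hhi
  have hwL' : ∀ x ∈ Metric.ball (0 : EuclideanSpace ℝ (Fin d)) 1, |u x - h x| ≤ L := fun x hx =>
    (hwL x hx).trans (by nlinarith [sq_nonneg ‖x‖])
  have iwl : IntegrableOn (fun x => (u x - h x) * lapl u x) (Metric.ball 0 1) := by
    refine loja_integrable _ (by fun_prop) (L * Ml) fun x hx => ?_
    rw [abs_mul]
    exact mul_le_mul (hwL' x hx) (hMl x hx) (abs_nonneg _) hL
  have iww : IntegrableOn (fun x => (u x - h x) ^ 2) (Metric.ball 0 1) := by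
    refine loja_integrable _ (by fun_prop) (L ^ 2) fun x hx => ?_
    rw [abs_pow]; exact pow_le_pow_left₀ (abs_nonneg _) (hwL' x hx) 2
  have ill : IntegrableOn (fun x => lapl u x ^ 2) (Metric.ball 0 1) := by
    refine loja_integrable _ (by fun_prop) (Ml ^ 2) fun x hx => ?_
    rw [abs_pow]; exact pow_le_pow_left₀ (abs_nonneg _) (hMl x hx) 2
  set B := Metric.ball (0 : EuclideanSpace ℝ (Fin d)) 1 with hB
  set UU := ∫ x in B, ∑ i, fderiv ℝ u x (EuclideanSpace.single i 1)
    * fderiv ℝ u x (EuclideanSpace.single i 1) with hUU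
  set UH := ∫ x in B, ∑ i, fderiv ℝ u x (EuclideanSpace.single i 1)
    * fderiv ℝ h x (EuclideanSpace.single i 1) with hUH
  set HH := ∫ x in B, ∑ i, fderiv ℝ h x (EuclideanSpace.single i 1)
    * fderiv ℝ h x (EuclideanSpace.single i 1) with hHH
  set WL := ∫ x in B, (u x - h x) * lapl u x with hWL
  have e1 : ∫ x in B, ‖gradient u x‖ ^ 2 = UU := by
    simp only [loja_grad, ← sq, hUU]
  have e2 : ∫ x in B, ‖gradient h x‖ ^ 2 = HH := by
    simp only [loja_grad, ← sq, hHH]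
  have e3 : UU - UH + WL = 0 := by
    have t := integral_add (iuu.sub iuh) iwl
    simp only [Pi.sub_apply] at t
    rw [integral_sub iuu iuh] at t
    rw [← Iu, hUU, hUH, hWL, ← t]
    refine setIntegral_congr_fun measurableSet_ball fun x hx => ?_
    simp only [hfd x hx, Pi.sub_apply, ← Finset.sum_sub_distrib]
    congr 1
    exact Finset.sum_congr rfl fun i _ => by ring
  have e4 : UH - HH = 0 := by
    rw [← Ih, hUH, hHH, ← integral_sub iuh ihh]
    refine setIntegral_congr_fun measurableSet_ball fun x hx => ?_
    simp only [hfd x hx, ← Finset.sum_sub_distrib, mul_zero, add_zero]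
    exact Finset.sum_congr rfl fun i _ => by ring
  have e5 : ∫ x in B, ∑ i, (fderiv ℝ (fun x => u x - h x) x (EuclideanSpace.single i 1)) ^ 2
      = UU - 2 * UH + HH := by
    have t := integral_add (iuu.sub (iuh.const_mul 2)) ihh
    simp only [Pi.sub_apply] at t
    rw [integral_sub iuu (iuh.const_mul 2), integral_const_mul] at t
    rw [hUU, hUH, hHH, ← t]
    refine setIntegral_congr_fun measurableSet_ball fun x hx => ?_
    simp only [hfd x hx, Pi.sub_apply, Finset.mul_sum, ← Finset.sum_sub_distrib,
      ← Finset.sum_add_distrib]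
    exact Finset.sum_congr rfl fun i _ => by ring
  have e6 : -WL ≤ (1/8) * (∫ x in B, (u x - h x) ^ 2) + 2 * ∫ x in B, lapl u x ^ 2 := by
    rw [hWL, ← integral_neg, ← integral_const_mul, ← integral_const_mul,
      ← integral_add (iww.const_mul _) (ill.const_mul _)]
    refine setIntegral_mono_on iwl.neg ((iww.const_mul _).add (ill.const_mul _))
      measurableSet_ball fun x hx => ?_
    nlinarith [sq_nonneg ((u x - h x) + 4 * lapl u x)]
  rw [e5] at hP
  rw [e1, e2]
  linarith
end

section
/- Let u : [0, T) → K be a strong solution of the parabolic variational inequality associated with (F, K). Then for almost every t ∈ (0, T) (namely every t at which u is differentiable and at which the variational inequality holds) one has ‖u'(t)‖² = −⟨u'(t), ∇F(u(t))⟩. -/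
open MeasureTheory Filter Topology Set
open scoped RealInnerProductSpace ENNReal

variable {H : Type*} [NormedAddCommGroup H] [InnerProductSpace ℝ H]

/-- `F(u + tv) = F(u) + t⟪v, ∇F(u)⟫ + o(t)` as `t → 0`, for all `u, v` in the subspace `W`. -/
def HasGradientOn (F : H → ℝ) (gF : H → H) (W : Submodule ℝ H) : Prop :=
  ∀ u ∈ W, ∀ v ∈ W, HasDerivAt (fun t : ℝ => F (u + t • v)) ⟪v, gF u⟫ 0

/-- `u : [0, T) → K`, with (a.e.) derivative `u'`, is a strong solution of the parabolic
variational inequality associated with `(F, K)`: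
continuity into `H` on `[0, T)`; `H¹_loc` regularity in time (a.e. differentiability with
locally square-integrable derivative); `u(t) ∈ W ∩ K` for `t ∈ (0, T)` with `t ↦ F(u(t))`
and `t ↦ ∇F(u(t))` continuous; and for a.e. `t ∈ (0, T)`,
`⟪u'(t) + ∇F(u(t)), v - u(t)⟫ ≥ 0` for every `v ∈ K`. -/
structure IsStrongSolutionOn (F : H → ℝ) (gF : H → H) (W : Submodule ℝ H) (K : Set H)
    (T : ℝ) (u u' : ℝ → H) : Prop where
  mem_K : ∀ t ∈ Ico (0:ℝ) T, u t ∈ K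
  contOn : ContinuousOn u (Ico 0 T)
  hasDeriv : ∀ᵐ t ∂(volume.restrict (Ioo (0:ℝ) T)), HasDerivAt u (u' t) t
  sqInt : ∀ a b : ℝ, 0 < a → b < T → IntegrableOn (fun t => ‖u' t‖ ^ 2) (Ioo a b)
  mem_W : ∀ t ∈ Ioo (0:ℝ) T, u t ∈ W
  contF : ContinuousOn (fun t => F (u t)) (Ioo 0 T)
  contgF : ContinuousOn (fun t => gF (u t)) (Ioo 0 T)
  varIneq : ∀ᵐ t ∂(volume.restrict (Ioo (0:ℝ) T)), ∀ v ∈ K, 0 ≤ ⟪u' t + gF (u t), v - u t⟫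

/-- **Lemma (i): a.e. `‖u'(t)‖² = -⟪u'(t), ∇F(u(t))⟫`** for a strong solution `u` of the
parabolic variational inequality associated with `(F, K)`. -/
theorem strong_solution_deriv_sq
    (F : H → ℝ) (gF : H → H) (W : Submodule ℝ H) (K : Set H)
    (hK : Convex ℝ K) (hF : HasGradientOn F gF W)
    (T : ℝ) (u u' : ℝ → H) (hu : IsStrongSolutionOn F gF W K T u u') :
    ∀ᵐ t ∂(volume.restrict (Ioo (0:ℝ) T)), ‖u' t‖ ^ 2 = -⟪u' t, gF (u t)⟫ := by
  filter_upwards [hu.hasDeriv, hu.varIneq, ae_restrict_mem measurableSet_Ioo] with t hd hv ht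
  have hg : HasDerivAt (fun s => ⟪u' t + gF (u t), u s - u t⟫) ⟪u' t + gF (u t), u' t⟫ t := by
    simpa using (hasDerivAt_const t (u' t + gF (u t))).inner ℝ (hd.sub_const (u t))
  have hm : IsLocalMin (fun s => ⟪u' t + gF (u t), u s - u t⟫) t := by
    filter_upwards [Ioo_mem_nhds ht.1 ht.2] with s hs
    simpa using hv (u s) (hu.mem_K s (Ioo_subset_Ico_self hs))
  have h0 := hm.hasDerivAt_eq_zero hg
  rw [inner_add_left, real_inner_self_eq_norm_sq, real_inner_comm] at h0
  linarith
end

section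
/- Let u : [0, T) → K be a strong solution of the parabolic variational inequality associated with (F, K). Then for almost every t ∈ (0, T) one has ‖u'(t)‖ = ‖∇F(u(t))‖_K, where ‖∇F(u(t))‖_K := max(0, sup_{v ∈ K, v ≠ u(t)} (−⟨v − u(t), ∇F(u(t))⟩ / ‖v − u(t)‖)). -/
open MeasureTheory Filter Topology Set
open scoped RealInnerProductSpace ENNReal

variable {H : Type*} [NormedAddCommGroup H] [InnerProductSpace ℝ H]

/-- The constrained norm `‖∇F(u)‖_K = max(0, sup_{v ∈ K, v ≠ u} (-⟪v - u, ∇F(u)⟫/‖v - u‖))`,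
computed in `[0, ∞]` (the truncation `max 0 ⬝` is realized by `ENNReal.ofReal`). -/
noncomputable def KNorm (gF : H → H) (K : Set H) (u : H) : ℝ≥0∞ :=
  ⨆ v ∈ K \ {u}, ENNReal.ofReal (-⟪v - u, gF u⟫ / ‖v - u‖)

/-- **Lemma (iii): a.e. `‖u'(t)‖ = ‖∇F(u(t))‖_K`** along a strong solution of the parabolic
variational inequality associated with `(F, K)`. -/
theorem strong_solution_deriv_eq_KNorm
    (F : H → ℝ) (gF : H → H) (W : Submodule ℝ H) (K : Set H)
    (hK : Convex ℝ K) (hF : HasGradientOn F gF W)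
    (T : ℝ) (u u' : ℝ → H) (hu : IsStrongSolutionOn F gF W K T u u') :
    ∀ᵐ t ∂(volume.restrict (Ioo (0:ℝ) T)), ENNReal.ofReal ‖u' t‖ = KNorm gF K (u t) := by
  filter_upwards [hu.hasDeriv, hu.varIneq, ae_restrict_mem measurableSet_Ioo] with t hd hv ht
  have hmem : ∀ᶠ s in 𝓝 t, u s ∈ K := by
    filter_upwards [Ioo_mem_nhds ht.1 ht.2] with s hs
    exact hu.mem_K s ⟨hs.1.le, hs.2⟩
  have h0 : ⟪u' t + gF (u t), u' t⟫ = 0 := by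
    have hmin : IsLocalMin (fun s => ⟪u' t + gF (u t), u s⟫) t := by
      filter_upwards [hmem] with s hs
      have := hv _ hs
      rw [inner_sub_right] at this
      linarith
    have hder : HasDerivAt (fun s => ⟪u' t + gF (u t), u s⟫) ⟪u' t + gF (u t), u' t⟫ t := by
      simpa using (hasDerivAt_const t (u' t + gF (u t))).inner ℝ hd
    exact hmin.hasDerivAt_eq_zero hder
  rw [inner_add_left, real_inner_self_eq_norm_sq] at h0
  apply le_antisymm
  · by_cases hz : u' t = 0
    · simp [hz]
    have hn : ‖u' t‖ ≠ 0 := norm_ne_zero_iff.mpr hz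
    have hs : Tendsto (slope u t) (𝓝[>] t) (𝓝 (u' t)) :=
      (hasDerivAt_iff_tendsto_slope.1 hd).mono_left
        (nhdsWithin_mono _ fun s hs => ne_of_gt hs)
    have hlim : Tendsto (fun s => -⟪slope u t s, gF (u t)⟫ / ‖slope u t s‖) (𝓝[>] t)
        (𝓝 ‖u' t‖) := by
      have h1 := ((hs.inner (𝕜 := ℝ) (tendsto_const_nhds (x := gF (u t)))).neg).div hs.norm hn
      have h2 : -⟪u' t, gF (u t)⟫ / ‖u' t‖ = ‖u' t‖ := by
        rw [div_eq_iff hn, real_inner_comm]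
        nlinarith
      rwa [h2] at h1
    refine le_of_tendsto (ENNReal.tendsto_ofReal hlim) ?_
    filter_upwards [self_mem_nhdsWithin, nhdsWithin_le_nhds hmem, hs.eventually_ne hz]
      with s hst hsK hsne
    have hpos : 0 < s - t := sub_pos.2 hst
    have hne : u s ≠ u t := by
      intro h
      apply hsne
      simp [slope_def_module, h]
    have hnn : ‖u s - u t‖ ≠ 0 := norm_ne_zero_iff.mpr (sub_ne_zero.2 hne)
    have he : -⟪slope u t s, gF (u t)⟫ / ‖slope u t s‖
        = -⟪u s - u t, gF (u t)⟫ / ‖u s - u t‖ := by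
      rw [slope_def_module, real_inner_smul_left, norm_smul, Real.norm_eq_abs,
        abs_of_pos (inv_pos.2 hpos)]
      field_simp
    rw [he]
    exact le_iSup₂_of_le (f := fun v (_ : v ∈ K \ {u t}) =>
      ENNReal.ofReal (-⟪v - u t, gF (u t)⟫ / ‖v - u t‖)) (u s) ⟨hsK, hne⟩ le_rfl
  · refine iSup₂_le fun v hvK => ENNReal.ofReal_le_ofReal ?_
    have h1 := hv v hvK.1
    rw [inner_add_left] at h1
    have h2 := real_inner_le_norm (u' t) (v - u t)
    have hp : 0 < ‖v - u t‖ := norm_pos_iff.2 (sub_ne_zero.2 hvK.2)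
    rw [div_le_iff₀ hp, real_inner_comm]
    linarith
end

section
/- There is a constant C > 0, depending only on the dimension d, such that the following holds. Let u ∈ K_th be of class C² on closure(B₁⁺) and satisfy the Signorini conditions ∂u/∂x_d ≤ 0 on B₁' and u · (∂u/∂x_d) = 0 on B₁'. Then F_th(u) ≥ F_th(φ) and (F_th(u) − F_th(φ))^{1/2} ≤ C ‖∇F_th(u)‖_K. (Constrained Łojasiewicz inequality with exponent γ = 1/2 for the thin-obstacle problem.) -/
open MeasureTheory Filter Topology Set

/-- The open upper half-ball `B₁⁺ = B₁ ∩ {x_d > 0}` (the distinguished coordinate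
direction is `i`). -/
def Bplus (d : ℕ) (i : Fin d) : Set (EuclideanSpace ℝ (Fin d)) :=
  Metric.ball (0 : EuclideanSpace ℝ (Fin d)) 1 ∩ {x | 0 < x i}

/-- The flat part `B₁' = B₁ ∩ {x_d = 0}`. -/
def Bprime (d : ℕ) (i : Fin d) : Set (EuclideanSpace ℝ (Fin d)) :=
  Metric.ball (0 : EuclideanSpace ℝ (Fin d)) 1 ∩ {x | x i = 0}

/-- The closed upper half-ball `closure(B₁⁺)`. -/
def Dplus (d : ℕ) (i : Fin d) : Set (EuclideanSpace ℝ (Fin d)) :=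
  closure (Bplus d i)

/-- The thin-obstacle (Dirichlet) energy `F_th(u) = (1/2)∫_{B₁⁺}|∇u|²`, where the gradient
is taken within the closed half-ball. -/
noncomputable def Fth (d : ℕ) (i : Fin d) (u : EuclideanSpace ℝ (Fin d) → ℝ) : ℝ :=
  (1/2) * ∫ x in Bplus d i, ‖fderivWithin ℝ u (Dplus d i) x‖ ^ 2

/-- The Laplacian of `u` within the closed half-ball: sum of the pure second derivatives
(within `closure(B₁⁺)`) in the coordinate directions. -/
noncomputable def laplTh (d : ℕ) (i : Fin d) (u : EuclideanSpace ℝ (Fin d) → ℝ)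
    (x : EuclideanSpace ℝ (Fin d)) : ℝ :=
  ∑ j : Fin d, iteratedFDerivWithin ℝ 2 u (Dplus d i) x
    ![EuclideanSpace.single j 1, EuclideanSpace.single j 1]

/-- The normal derivative `∂u/∂x_d` (within the closed half-ball). -/
noncomputable def dNorm (d : ℕ) (i : Fin d) (u : EuclideanSpace ℝ (Fin d) → ℝ)
    (x : EuclideanSpace ℝ (Fin d)) : ℝ :=
  fderivWithin ℝ u (Dplus d i) x (EuclideanSpace.single i 1)

/-- The admissible class `K_th` of the thin-obstacle problem: continuous functions on the
closed half-ball, nonnegative on `B₁'`, equal to `g` on `∂B₁ ∩ {x_d ≥ 0}`. -/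
def MemKth (d : ℕ) (i : Fin d) (g u : EuclideanSpace ℝ (Fin d) → ℝ) : Prop :=
  ContinuousOn u (Dplus d i) ∧ (∀ x ∈ Bprime d i, 0 ≤ u x) ∧
  ∀ x ∈ Metric.sphere (0 : EuclideanSpace ℝ (Fin d)) 1, 0 ≤ x i → u x = g x

/-- The constrained norm `‖∇F_th(u)‖_K`: `max(0, sup)` over `v ∈ K_th` with `v ≠ u` in
`L²(B₁⁺)` of `(∫_{B₁⁺}(v - u)Δu)/‖v - u‖_{L²(B₁⁺)}`. -/
noncomputable def KnormTh (d : ℕ) (i : Fin d) (g u : EuclideanSpace ℝ (Fin d) → ℝ) : ℝ :=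
  max 0 (sSup {r : ℝ | ∃ v : EuclideanSpace ℝ (Fin d) → ℝ, MemKth d i g v ∧
    (∫ x in Bplus d i, (v x - u x) ^ 2) ≠ 0 ∧
    r = (∫ x in Bplus d i, (v x - u x) * laplTh d i u x) /
        Real.sqrt (∫ x in Bplus d i, (v x - u x) ^ 2)})


lemma Bplus_isOpen (d : ℕ) (i : Fin d) : IsOpen (Bplus d i) := by
  refine Metric.isOpen_ball.inter ?_
  exact isOpen_lt continuous_const (by fun_prop)

lemma Bplus_subset (d : ℕ) (i : Fin d) : Bplus d i ⊆ Dplus d i := subset_closure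

lemma Dplus_eq (d : ℕ) (i : Fin d) :
    Dplus d i = Metric.closedBall 0 1 ∩ {x | 0 ≤ x i} := by
  apply Subset.antisymm
  · refine closure_minimal ?_ ?_
    · rintro x ⟨h1, h2⟩
      exact ⟨Metric.ball_subset_closedBall h1, le_of_lt (show 0 < x i from h2)⟩
    · refine Metric.isClosed_closedBall.inter ?_
      exact isClosed_le continuous_const (by fun_prop)
  · rintro x ⟨h1, h2⟩
    simp only [Metric.mem_closedBall, dist_zero_right, mem_ofPred_eq] at h1 h2
    have ht : Tendsto (fun t : ℝ => (1 - t) • x + (t / 2) • EuclideanSpace.single i (1:ℝ))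
        (𝓝[>] 0) (𝓝 x) := by
      have : Continuous (fun t : ℝ => (1 - t) • x + (t / 2) • EuclideanSpace.single i (1:ℝ)) := by
        fun_prop
      have h := this.tendsto 0
      simp only [sub_zero, one_smul, zero_div, zero_smul, add_zero] at h
      exact h.mono_left nhdsWithin_le_nhds
    refine mem_closure_of_tendsto ht ?_
    filter_upwards [Ioo_mem_nhdsGT (zero_lt_one (α := ℝ))] with t ht
    constructor
    · rw [Metric.mem_ball, dist_zero_right]
      refine (norm_add_le _ _).trans_lt ?_
      rw [norm_smul, norm_smul, PiLp.norm_single, Real.norm_eq_abs, Real.norm_eq_abs,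
        abs_of_pos (by linarith [ht.2]), abs_of_pos (by linarith [ht.1])]
      simp only [norm_one, mul_one]
      nlinarith [ht.1, ht.2]
    · simp only [mem_ofPred_eq, PiLp.add_apply, PiLp.smul_apply, smul_eq_mul,
        PiLp.single_apply, if_true, mul_one]
      nlinarith [ht.1, ht.2]

lemma Dplus_convex (d : ℕ) (i : Fin d) : Convex ℝ (Dplus d i) := by
  rw [Dplus_eq]
  refine (convex_closedBall _ _).inter ?_
  intro x hx y hy a b ha hb hab
  simp only [mem_ofPred_eq, PiLp.add_apply, PiLp.smul_apply, smul_eq_mul] at *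
  positivity

lemma Bplus_nonempty (d : ℕ) (i : Fin d) : (Bplus d i).Nonempty := by
  refine ⟨EuclideanSpace.single i (1/2 : ℝ), ?_, ?_⟩
  · rw [Metric.mem_ball, dist_zero_right, PiLp.norm_single]
    norm_num
  · simp

lemma Dplus_udiff (d : ℕ) (i : Fin d) : UniqueDiffOn ℝ (Dplus d i) := by
  refine uniqueDiffOn_convex (Dplus_convex d i) ?_
  exact (Bplus_nonempty d i).mono
    (interior_maximal (Bplus_subset d i) (Bplus_isOpen d i))

lemma Dplus_compact (d : ℕ) (i : Fin d) : IsCompact (Dplus d i) := by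
  refine (isCompact_closedBall (0 : EuclideanSpace ℝ (Fin d)) 1).of_isClosed_subset isClosed_closure ?_
  rw [Dplus_eq]; exact inter_subset_left

lemma Dplus_nhds {d : ℕ} {i : Fin d} {x : EuclideanSpace ℝ (Fin d)} (hx : x ∈ Bplus d i) : Dplus d i ∈ 𝓝 x :=
  mem_of_superset ((Bplus_isOpen d i).mem_nhds hx) (Bplus_subset d i)

lemma int_of_cont {d : ℕ} {i : Fin d} {f : (EuclideanSpace ℝ (Fin d)) → ℝ} (hf : ContinuousOn f (Dplus d i)) :
    IntegrableOn f (Bplus d i) :=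
  (hf.integrableOn_compact (Dplus_compact d i)).mono_set (Bplus_subset d i)

lemma cauchy {d : ℕ} {i : Fin d} {f g : (EuclideanSpace ℝ (Fin d)) → ℝ} (hf : ContinuousOn f (Dplus d i))
    (hg : ContinuousOn g (Dplus d i)) :
    ∫ x in Bplus d i, f x * g x ≤ Real.sqrt (∫ x in Bplus d i, f x ^ 2) *
      Real.sqrt (∫ x in Bplus d i, g x ^ 2) := by
  have hA : 0 ≤ ∫ x in Bplus d i, f x ^ 2 := integral_nonneg fun x => sq_nonneg _
  have key : ∀ t : ℝ, 0 ≤ (∫ x in Bplus d i, f x ^ 2) * (t * t) +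
      (-2 * ∫ x in Bplus d i, f x * g x) * t + ∫ x in Bplus d i, g x ^ 2 := by
    intro t
    have h1 : 0 ≤ ∫ x in Bplus d i, (t * f x - g x) ^ 2 := integral_nonneg fun x => sq_nonneg _
    have h2 : ∫ x in Bplus d i, (t * f x - g x) ^ 2 = (∫ x in Bplus d i, f x ^ 2) * (t * t) +
      (-2 * ∫ x in Bplus d i, f x * g x) * t + ∫ x in Bplus d i, g x ^ 2 := by
      have e : ∀ x, (t * f x - g x) ^ 2 = (t * t) * f x ^ 2 + (-2 * t) * (f x * g x) + g x ^ 2 := by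
        intro x; ring
      simp only [e]
      have i1 : IntegrableOn (fun x => f x ^ 2) (Bplus d i) := int_of_cont (hf.pow 2)
      have i2 : IntegrableOn (fun x => f x * g x) (Bplus d i) := int_of_cont (hf.mul hg)
      have i3 : IntegrableOn (fun x => g x ^ 2) (Bplus d i) := int_of_cont (hg.pow 2)
      have i12 : IntegrableOn (fun x => (t * t) * f x ^ 2 + (-2 * t) * (f x * g x)) (Bplus d i) :=
        (i1.const_mul _).add (i2.const_mul _)
      rw [integral_add i12 i3, integral_add (i1.const_mul _) (i2.const_mul _), integral_const_mul, integral_const_mul]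
      ring
    linarith
  have hd := discrim_le_zero key
  rw [← Real.sqrt_mul hA]
  apply Real.le_sqrt_of_sq_le
  unfold discrim at hd
  nlinarith

lemma box_div (n : ℕ) (i : Fin (n+1)) (F : Fin (n+1) → (EuclideanSpace ℝ (Fin (n+1))) → ℝ)
    (F' : Fin (n+1) → (EuclideanSpace ℝ (Fin (n+1))) → ((EuclideanSpace ℝ (Fin (n+1))) →L[ℝ] ℝ))
    (hc : ∀ j, ContinuousOn (F j) {x | 0 ≤ x i})
    (hd : ∀ j x, 0 < x i → HasFDerivAt (F j) (F' j x) x)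
    (h0 : ∀ j x, 1 ≤ ‖x‖ → F j x = 0)
    (hI : IntegrableOn (fun x => ∑ j, F' j x (EuclideanSpace.single j 1)) (Bplus (n+1) i))
    (hz : ∀ x, x ∉ Bplus (n+1) i → ∑ j, F' j x (EuclideanSpace.single j 1) = 0)
    (hs : ∀ x, x i = 0 → 0 ≤ F i x) :
    ∫ x in Bplus (n+1) i, ∑ j, F' j x (EuclideanSpace.single j 1) ≤ 0 := by
  set DF := fun x => ∑ j, F' j x (EuclideanSpace.single j 1) with hDF
  have hmp := PiLp.volume_preserving_toLp (Fin (n+1))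
  have hemb : MeasurableEmbedding (@WithLp.toLp 2 (Fin (n+1) → ℝ)) :=
    (MeasurableEquiv.toLp 2 (Fin (n+1) → ℝ)).measurableEmbedding
  have hI2 : Integrable DF := by
    rw [← integrableOn_iff_integrable_of_support_subset (s := Bplus (n+1) i)]
    · exact hI
    · intro x hx; by_contra h; exact hx (hz x h)
  set a : Fin (n+1) → ℝ := Function.update (fun _ => -2) i 0 with ha
  set b : Fin (n+1) → ℝ := fun _ => 2 with hb
  have hai : a i = 0 := by simp [ha]
  have haj : ∀ j, j ≠ i → a j = -2 := by intro j hj; simp [ha, hj]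
  have hab : a ≤ b := by
    intro j
    by_cases h : j = i
    · subst h; simp [hai, hb]
    · simp [haj j h, hb]
  let L : (Fin (n+1) → ℝ) →L[ℝ] (EuclideanSpace ℝ (Fin (n+1))) :=
    ((PiLp.continuousLinearEquiv 2 ℝ (fun _ : Fin (n+1) => ℝ)).symm : _ →L[ℝ] _)
  have hL : ∀ x, L x = WithLp.toLp 2 x := fun x => rfl
  have hLs : ∀ j, L (Pi.single j 1) = EuclideanSpace.single j 1 := fun x => rfl
  have hnorm : ∀ (x : Fin (n+1) → ℝ) j, 1 ≤ |x j| → 1 ≤ ‖L x‖ := by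
    intro x j h
    refine h.trans ?_
    exact PiLp.norm_apply_le (L x) j
  have main := integral_divergence_of_hasFDerivAt_off_countable' a b hab
    (fun j x => F j (L x)) (fun j x => (F' j (L x)).comp L) ∅ countable_empty
    (fun j => (hc j).comp L.continuous.continuousOn (fun x hx => by
      have := hx.1 i
      rw [hai] at this; exact this))
    (fun x hx j => by
      have : x i ∈ Ioo (a i) (b i) := hx.1 i (mem_univ i)
      rw [hai] at this
      exact (hd j (L x) this.1).comp x L.hasFDerivAt)
    (by
      have : Integrable (fun x => DF (L x)) := (hmp.integrable_comp_emb hemb).2 hI2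
      refine this.integrableOn.congr_fun ?_ measurableSet_Icc
      intro x hx
      simp [hDF, hLs])
  have e1 : ∫ x in Icc a b, ∑ j, ((F' j (L x)).comp L) (Pi.single j 1) = ∫ x in Bplus (n+1) i, DF x := by
    have e2 : ∫ x in Bplus (n+1) i, DF x = ∫ x, DF x :=
      setIntegral_eq_integral_of_forall_compl_eq_zero (fun x hx => hz x hx)
    rw [e2, ← hmp.integral_comp hemb]
    have e3 : ∫ x in Icc a b, DF (L x) = ∫ x, DF (L x) := by
      refine setIntegral_eq_integral_of_forall_compl_eq_zero (fun x hx => hz _ ?_)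
      intro hB
      apply hx
      have h1 : ‖L x‖ < 1 := by simpa using hB.1
      have h2 : 0 < x i := hB.2
      have h3 : ∀ j, |x j| < 1 := fun j => lt_of_not_ge fun h => absurd (hnorm x j h) (not_le.2 h1)
      constructor
      · intro j
        by_cases h : j = i
        · subst h; rw [hai]; exact h2.le
        · rw [haj j h]; linarith [(abs_lt.1 (h3 j)).1]
      · intro j
        have := (abs_lt.1 (h3 j)).2
        simp only [hb]; linarith
    exact e3
  rw [← e1, main]
  apply Finset.sum_nonpos
  intro j _
  have f1 : ∀ x : Fin n → ℝ, F j (L (j.insertNth (b j) x)) = 0 := by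
    intro x
    refine h0 j _ (hnorm _ j ?_)
    simp [hb]
  have f2 : ∀ x : Fin n → ℝ, 0 ≤ F j (L (j.insertNth (a j) x)) := by
    intro x
    by_cases h : j = i
    · subst h
      apply hs
      rw [hL]; simp [hai]
    · refine (h0 j _ (hnorm _ j ?_)).ge
      simp [haj j h]
  simp only [f1, integral_zero, zero_sub, neg_nonpos]
  exact integral_nonneg f2

/-- one-dimensional cutoff profile -/
noncomputable def psi (t : ℝ) : ℝ := Real.smoothTransition (t - 1)

lemma psi_contDiff : ContDiff ℝ 1 psi := by
  unfold psi
  have : ContDiff ℝ 1 Real.smoothTransition := Real.smoothTransition.contDiff (n := 1)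
  exact this.comp (by fun_prop)

lemma psi_zero {t : ℝ} (h : t ≤ 1) : psi t = 0 :=
  Real.smoothTransition.zero_of_nonpos (by linarith)

lemma psi_one {t : ℝ} (h : 2 ≤ t) : psi t = 1 :=
  Real.smoothTransition.one_of_one_le (by linarith)

lemma psi_deriv_zero {t : ℝ} (h : 2 < t) : deriv psi t = 0 := by
  have : psi =ᶠ[𝓝 t] fun _ => 1 := by
    filter_upwards [lt_mem_nhds h] with s hs
    exact psi_one hs.le
  rw [this.deriv_eq]; simp

lemma psi_deriv_cont : Continuous (deriv psi) := psi_contDiff.continuous_deriv le_rfl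

lemma psi_bound : ∃ C, 0 ≤ C ∧ ∀ t, 0 ≤ t → |deriv psi t * t| ≤ C := by
  obtain ⟨C, hC⟩ := (isCompact_Icc (a := (0:ℝ)) (b := 2)).exists_bound_of_continuousOn
    (f := fun t => deriv psi t * t) (psi_deriv_cont.mul continuous_id).continuousOn
  refine ⟨max C 0, le_max_right _ _, fun t ht => ?_⟩
  by_cases h : t ≤ 2
  · exact (hC t ⟨ht, h⟩).trans (le_max_left _ _)
  · rw [psi_deriv_zero (not_le.1 h)]; simp

/-- spatial cutoff -/
noncomputable def eta {d : ℕ} (k : ℕ) (x : EuclideanSpace ℝ (Fin d)) : ℝ := psi (k * (1 - ‖x‖ ^ 2))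

/-- derivative of the spatial cutoff -/
noncomputable def eta' {d : ℕ} (k : ℕ) (x : EuclideanSpace ℝ (Fin d)) : (EuclideanSpace ℝ (Fin d)) →L[ℝ] ℝ :=
  (deriv psi (k * (1 - ‖x‖ ^ 2)) * (k * (-2))) • innerSL ℝ x

lemma eta_hasFDerivAt {d : ℕ} (k : ℕ) (x : EuclideanSpace ℝ (Fin d)) : HasFDerivAt (eta k) (eta' k x) x := by
  have h1 : HasFDerivAt (fun y : EuclideanSpace ℝ (Fin d) => (k:ℝ) * (1 - ‖y‖ ^ 2))
      (((k:ℝ) * (-2)) • innerSL ℝ x) x := by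
    have h := (((hasStrictFDerivAt_norm_sq x).hasFDerivAt).const_sub 1).const_mul (k:ℝ)
    have e : (((k:ℝ) * (-2)) • innerSL ℝ x : (EuclideanSpace ℝ (Fin d)) →L[ℝ] ℝ) =
        (k:ℝ) • -((2:ℕ) • (innerSL ℝ x : (EuclideanSpace ℝ (Fin d)) →L[ℝ] ℝ)) := by
      rw [mul_smul, neg_smul, ← Nat.cast_smul_eq_nsmul ℝ]
      norm_num
    rw [e]
    exact h
  have h2 : HasDerivAt psi (deriv psi (k * (1 - ‖x‖ ^ 2))) (k * (1 - ‖x‖ ^ 2)) :=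
    ((psi_contDiff.differentiable (by norm_num)) _).hasDerivAt
  have h3 := h2.comp_hasFDerivAt x h1
  rw [smul_smul] at h3
  exact h3

lemma eta_cont {d : ℕ} (k : ℕ) : Continuous (eta k : (EuclideanSpace ℝ (Fin d)) → ℝ) := by
  unfold eta
  exact psi_contDiff.continuous.comp (by fun_prop)

lemma eta_ev_zero {d : ℕ} (k : ℕ) {x : EuclideanSpace ℝ (Fin d)} (hx : 1 ≤ ‖x‖) : ∀ᶠ y in 𝓝 x, eta k y = 0 := by
  have : ∀ᶠ y : EuclideanSpace ℝ (Fin d) in 𝓝 x, (k:ℝ) * (1 - ‖y‖ ^ 2) < 1 := by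
    have hc : Continuous (fun y : EuclideanSpace ℝ (Fin d) => (k:ℝ) * (1 - ‖y‖ ^ 2)) := by fun_prop
    refine hc.continuousAt.eventually_lt_const ?_
    have : 1 - ‖x‖ ^ 2 ≤ 0 := by nlinarith
    nlinarith [(Nat.cast_nonneg k : (0:ℝ) ≤ k)]
  filter_upwards [this] with y hy
  exact psi_zero hy.le

lemma green (n : ℕ) (i : Fin (n+1)) (w δ : (EuclideanSpace ℝ (Fin (n+1))) → ℝ) (V : Fin (n+1) → (EuclideanSpace ℝ (Fin (n+1))) → ℝ)
    (hw : ContDiffOn ℝ 1 w (Dplus (n+1) i))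
    (hw0 : ∀ x ∈ Metric.sphere (0 : EuclideanSpace ℝ (Fin (n+1))) 1, 0 ≤ x i → w x = 0)
    (hVc : ∀ j, ContinuousOn (V j) (Dplus (n+1) i))
    (hVd : ∀ j, ∀ x ∈ Bplus (n+1) i, DifferentiableAt ℝ (V j) x)
    (hδc : ContinuousOn δ (Dplus (n+1) i))
    (hδ : ∀ x ∈ Bplus (n+1) i, ∑ j, fderiv ℝ (V j) x (EuclideanSpace.single j 1) = δ x)
    (hs : ∀ x ∈ Bprime (n+1) i, 0 ≤ w x * V i x) :
    ∫ x in Bplus (n+1) i, ((∑ j, fderivWithin ℝ w (Dplus (n+1) i) x (EuclideanSpace.single j 1)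
      * V j x) + w x * δ x) ≤ 0 := by
  set D := Dplus (n+1) i with hD
  set B := Bplus (n+1) i with hB
  have hwc : ContinuousOn w D := hw.continuousOn
  have hw'c : ContinuousOn (fderivWithin ℝ w D) D :=
    hw.continuousOn_fderivWithin (Dplus_udiff _ _) le_rfl
  set g := fun x => (∑ j, fderivWithin ℝ w D x (EuclideanSpace.single j 1) * V j x) + w x * δ x
    with hg
  have hgc : ContinuousOn g D := by
    refine ContinuousOn.add (continuousOn_finsetSum _ fun j _ => ?_) (hwc.mul hδc)
    exact (hw'c.clm_apply continuousOn_const).mul (hVc j)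
  set R := fun x : EuclideanSpace ℝ (Fin (n+1)) => ∑ j, x j * V j x with hR
  have hRc : ContinuousOn R D := by
    refine continuousOn_finsetSum _ fun j _ => ?_
    exact (Continuous.continuousOn (by fun_prop)).mul (hVc j)
  set G := fun (k : ℕ) (x : EuclideanSpace ℝ (Fin (n+1))) => eta k x * g x +
    w x * (deriv psi (k * (1 - ‖x‖ ^ 2)) * (k * (-2)) * R x) with hG
  have hGc : ∀ k, ContinuousOn (G k) D := by
    intro k
    refine ((eta_cont k).continuousOn.mul hgc).add (hwc.mul (ContinuousOn.mul ?_ hRc))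
    refine Continuous.continuousOn ?_
    exact (psi_deriv_cont.comp (by fun_prop)).mul continuous_const
  -- the Lipschitz estimate
  obtain ⟨L, hL⟩ := (Dplus_compact (n+1) i).exists_bound_of_continuousOn hw'c
  have hL0 : 0 ≤ L := by
    obtain ⟨x, hx⟩ := Bplus_nonempty (n+1) i
    exact (norm_nonneg _).trans (hL x (Bplus_subset _ _ hx))
  have hlip : ∀ x ∈ B, |w x| ≤ L * (1 - ‖x‖ ^ 2) := by
    intro x hx
    have hx1 : ‖x‖ < 1 := by simpa using hx.1
    have hx2 : 0 < x i := hx.2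
    have hxn : 0 < ‖x‖ := by
      rw [norm_pos_iff]; rintro rfl; simp at hx2
    set y := ‖x‖⁻¹ • x with hy
    have hyn : ‖y‖ = 1 := by rw [hy, norm_smul, norm_inv, norm_norm]; field_simp
    have hyi : 0 ≤ y i := by
      rw [hy]; simp only [PiLp.smul_apply, smul_eq_mul]; positivity
    have hyD : y ∈ D := by
      rw [hD, Dplus_eq]; exact ⟨by simp [hyn], hyi⟩
    have h := (Dplus_convex (n+1) i).norm_image_sub_le_of_norm_fderivWithin_le
      (hw.differentiableOn (by norm_num)) hL hyD (Bplus_subset _ _ hx)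
    rw [hw0 y (by simp [hyn]) hyi, sub_zero] at h
    have e : ‖x - y‖ = 1 - ‖x‖ := by
      have : x - y = (1 - ‖x‖⁻¹) • x := by rw [hy, sub_smul, one_smul]
      rw [this, norm_smul, Real.norm_eq_abs, abs_of_nonpos]
      · field_simp; ring
      · have := (one_le_inv₀ hxn).2 hx1.le
        linarith
    rw [e] at h
    refine h.trans ?_
    apply mul_le_mul_of_nonneg_left _ hL0
    nlinarith
  -- inequality with cutoff
  have step : ∀ k, ∫ x in B, G k x ≤ 0 := by
    intro k
    classical
    set F' : Fin (n+1) → (EuclideanSpace ℝ (Fin (n+1))) → ((EuclideanSpace ℝ (Fin (n+1))) →L[ℝ] ℝ) := fun j x =>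
      if x ∈ B then (eta k x * w x) • fderiv ℝ (V j) x +
        V j x • (eta k x • fderivWithin ℝ w D x + w x • eta' k x) else 0 with hF'
    have hsum : ∀ x ∈ B, ∑ j, F' j x (EuclideanSpace.single j 1) = G k x := by
      intro x hx
      simp only [hF', if_pos hx, hG, hg, hR]
      rw [← hδ x hx]
      simp only [eta', add_apply, smul_apply, smul_eq_mul, innerSL_apply_apply,
        mul_add, Finset.mul_sum, Finset.sum_add_distrib, EuclideanSpace.inner_single_right]
      rw [add_left_comm, add_assoc]
      simp only [one_mul, conj_trivial]
      congr 1
      · exact Finset.sum_congr rfl fun j _ => by ring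
      congr 1
      · exact Finset.sum_congr rfl fun j _ => by ring
      · exact Finset.sum_congr rfl fun j _ => by ring
    have hb := box_div n i (fun j x => eta k x * w x * V j x) F' ?_ ?_ ?_ ?_ ?_ ?_
    · rw [setIntegral_congr_fun (Bplus_isOpen _ _).measurableSet hsum] at hb
      exact hb
    · intro j x hx
      have hx : 0 ≤ x i := hx
      by_cases h1 : 1 ≤ ‖x‖
      · have : (fun x => eta k x * w x * V j x) =ᶠ[𝓝 x] fun _ => 0 := by
          filter_upwards [eta_ev_zero k h1] with y hy
          simp [hy]
        exact (continuousAt_const.congr this.symm).continuousWithinAt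
      · have hxD : x ∈ D := by
          rw [hD, Dplus_eq]; exact ⟨by simpa using (not_le.1 h1).le, hx⟩
        have := (((eta_cont k).continuousOn.mul hwc).mul (hVc j)) x hxD
        refine this.mono_of_mem_nhdsWithin ?_
        have hball : Metric.ball (0 : EuclideanSpace ℝ (Fin (n+1))) 1 ∈ 𝓝 x :=
          Metric.isOpen_ball.mem_nhds (by simpa using h1)
        filter_upwards [self_mem_nhdsWithin, mem_nhdsWithin_of_mem_nhds hball] with y hy1 hy2
        rw [hD, Dplus_eq]
        exact ⟨Metric.ball_subset_closedBall hy2, hy1⟩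
    · intro j x hx
      by_cases h1 : 1 ≤ ‖x‖
      · have : (fun x => eta k x * w x * V j x) =ᶠ[𝓝 x] fun _ => 0 := by
          filter_upwards [eta_ev_zero k h1] with y hy
          simp [hy]
        have hxB : x ∉ B := fun h => absurd h1 (not_le.2 (by simpa using h.1))
        simp only [hF', if_neg hxB]
        exact (hasFDerivAt_const (0:ℝ) x).congr_of_eventuallyEq this
      · have hxB : x ∈ B := ⟨by simpa using h1, hx⟩
        simp only [hF', if_pos hxB]
        have hwd : HasFDerivAt w (fderivWithin ℝ w D x) x :=
          ((hw.differentiableOn (by norm_num)) x (Bplus_subset _ _ hxB)).hasFDerivWithinAt.hasFDerivAt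
            (Dplus_nhds hxB)
        exact ((eta_hasFDerivAt k x).mul hwd).mul (hVd j x hxB).hasFDerivAt
    · intro j x hx
      have := (eta_ev_zero k hx).self_of_nhds
      simp [this]
    · exact (int_of_cont (hGc k)).congr_fun (fun x hx => (hsum x hx).symm)
        (Bplus_isOpen _ _).measurableSet
    · intro x hx
      apply Finset.sum_eq_zero
      intro j _
      have : x ∉ B := hx
      simp [hF', this]
    · intro x hx
      by_cases h1 : 1 ≤ ‖x‖
      · have := (eta_ev_zero k h1).self_of_nhds
        simp [this]
      · have := hs x ⟨by simpa using h1, hx⟩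
        show 0 ≤ eta k x * w x * V i x
        rw [mul_assoc]
        exact mul_nonneg (Real.smoothTransition.nonneg _) this
  -- limit
  obtain ⟨C, hC0, hC⟩ := psi_bound
  obtain ⟨M, hM⟩ := (Dplus_compact (n+1) i).exists_bound_of_continuousOn hgc
  obtain ⟨M', hM'⟩ := (Dplus_compact (n+1) i).exists_bound_of_continuousOn hRc
  have lim : Tendsto (fun k => ∫ x in B, G k x) atTop (𝓝 (∫ x in B, g x)) := by
    have hfin : IntegrableOn (fun _ : EuclideanSpace ℝ (Fin (n+1)) => M + L * C * 2 * M') B :=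
      int_of_cont continuousOn_const
    refine tendsto_integral_of_dominated_convergence _
      (fun k => (int_of_cont (hGc k)).aestronglyMeasurable) hfin ?_ ?_
    · intro k
      refine (ae_restrict_iff' (Bplus_isOpen _ _).measurableSet).2 (Eventually.of_forall ?_)
      intro x hx
      have hx1 : ‖x‖ < 1 := by simpa using hx.1
      have hN : 0 < 1 - ‖x‖ ^ 2 := by nlinarith [norm_nonneg x]
      have a1 := hM x (Bplus_subset _ _ hx)
      have a2 := hM' x (Bplus_subset _ _ hx)
      have a3 := hC (k * (1 - ‖x‖ ^ 2)) (by positivity)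
      have a4 := hlip x hx
      have a5 : |eta k x| ≤ 1 := by
        rw [eta, psi, abs_of_nonneg (Real.smoothTransition.nonneg _)]
        exact Real.smoothTransition.le_one _
      refine (norm_add_le _ _).trans (add_le_add ?_ ?_)
      · rw [norm_mul]
        calc _ ≤ 1 * M := mul_le_mul a5 a1 (norm_nonneg _) (by norm_num)
          _ = M := one_mul _
      · rw [norm_mul, norm_mul, Real.norm_eq_abs, Real.norm_eq_abs]
        have : |deriv psi (k * (1 - ‖x‖ ^ 2)) * (k * (-2))| * (1 - ‖x‖ ^ 2)
            = |deriv psi (k * (1 - ‖x‖ ^ 2)) * (k * (1 - ‖x‖ ^ 2))| * 2 := by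
          rw [← abs_of_pos hN, ← abs_mul, ← abs_two (α := ℝ), ← abs_mul, ← abs_neg, abs_of_pos hN]
          congr 1
          simp only [abs_two]; ring
        calc |w x| * (|deriv psi (k * (1 - ‖x‖ ^ 2)) * (k * (-2))| * ‖R x‖)
            ≤ (L * (1 - ‖x‖ ^ 2)) * (|deriv psi (k * (1 - ‖x‖ ^ 2)) * (k * (-2))| * ‖R x‖) :=
              mul_le_mul_of_nonneg_right a4 (by positivity)
          _ = L * (|deriv psi (k * (1 - ‖x‖ ^ 2)) * (k * (-2))| * (1 - ‖x‖ ^ 2)) * ‖R x‖ := by ring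
          _ = L * |deriv psi (k * (1 - ‖x‖ ^ 2)) * (k * (1 - ‖x‖ ^ 2))| * 2 * ‖R x‖ := by
              rw [this]; ring
          _ ≤ L * C * 2 * M' := by gcongr
    · refine (ae_restrict_iff' (Bplus_isOpen _ _).measurableSet).2 (Eventually.of_forall ?_)
      intro x hx
      have hx1 : ‖x‖ < 1 := by simpa using hx.1
      have hN : 0 < 1 - ‖x‖ ^ 2 := by nlinarith [norm_nonneg x]
      have ht : Tendsto (fun k : ℕ => (k:ℝ) * (1 - ‖x‖ ^ 2)) atTop atTop :=
        tendsto_natCast_atTop_atTop.atTop_mul_const hN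
      refine tendsto_const_nhds.congr' ?_
      filter_upwards [ht.eventually_gt_atTop 2] with k hk
      simp only [hG, eta, psi_one hk.le, psi_deriv_zero hk]
      ring
  exact le_of_tendsto' lim step

lemma normsq {d : ℕ} (L : (EuclideanSpace ℝ (Fin d)) →L[ℝ] ℝ) :
    ‖L‖ ^ 2 = ∑ j, (L (EuclideanSpace.single j 1)) ^ 2 := by
  have h := (EuclideanSpace.basisFun (Fin d) ℝ).norm_dual L
  simp only [EuclideanSpace.basisFun_apply] at h
  exact h

lemma poincare (n : ℕ) (i : Fin (n+1)) (w : (EuclideanSpace ℝ (Fin (n+1))) → ℝ)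
    (hw : ContDiffOn ℝ 1 w (Dplus (n+1) i))
    (hw0 : ∀ x ∈ Metric.sphere (0 : EuclideanSpace ℝ (Fin (n+1))) 1, 0 ≤ x i → w x = 0) :
    ∫ x in Bplus (n+1) i, w x ^ 2 ≤
      4 * ∫ x in Bplus (n+1) i, ‖fderivWithin ℝ w (Dplus (n+1) i) x‖ ^ 2 := by
  have hwc : ContinuousOn w (Dplus (n+1) i) := hw.continuousOn
  have hw'c : ContinuousOn (fderivWithin ℝ w (Dplus (n+1) i)) (Dplus (n+1) i) :=
    hw.continuousOn_fderivWithin (Dplus_udiff _ _) le_rfl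
  have hic : ContinuousOn (fun x : EuclideanSpace ℝ (Fin (n+1)) => x i) (Dplus (n+1) i) :=
    Continuous.continuousOn (by fun_prop)
  have hic' : ContinuousOn (fun x : EuclideanSpace ℝ (Fin (n+1)) =>
      fderivWithin ℝ w (Dplus (n+1) i) x (EuclideanSpace.single i 1)) (Dplus (n+1) i) :=
    hw'c.clm_apply continuousOn_const
  have hwd : ∀ x ∈ Bplus (n+1) i, HasFDerivAt w (fderivWithin ℝ w (Dplus (n+1) i) x) x :=
    fun x hx => ((hw.differentiableOn (by norm_num)) x
      (Bplus_subset _ _ hx)).hasFDerivWithinAt.hasFDerivAt (Dplus_nhds hx)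
  have hVd : ∀ x ∈ Bplus (n+1) i, HasFDerivAt (fun x => w x * x i)
      (w x • (EuclideanSpace.proj i : (EuclideanSpace ℝ (Fin (n+1))) →L[ℝ] ℝ) +
        x i • fderivWithin ℝ w (Dplus (n+1) i) x) x := by
    intro x hx
    exact (hwd x hx).mul (EuclideanSpace.proj i : (EuclideanSpace ℝ (Fin (n+1))) →L[ℝ] ℝ).hasFDerivAt
  have h := green n i w
    (fun x => w x + x i * fderivWithin ℝ w (Dplus (n+1) i) x (EuclideanSpace.single i 1))
    (fun j x => if j = i then w x * x i else 0) hw hw0 ?_ ?_ ?_ ?_ ?_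
  · have hpt : ∀ x ∈ Bplus (n+1) i, (1/2) * w x ^ 2 -
        2 * ‖fderivWithin ℝ w (Dplus (n+1) i) x‖ ^ 2 ≤
        (∑ j, fderivWithin ℝ w (Dplus (n+1) i) x (EuclideanSpace.single j 1)
        * (if j = i then w x * x i else 0)) + w x * (w x + x i *
          fderivWithin ℝ w (Dplus (n+1) i) x (EuclideanSpace.single i 1)) := by
      intro x hx
      simp only [mul_ite, mul_zero, Finset.sum_ite_eq', Finset.mem_univ, if_true]
      rw [normsq]
      set p := fderivWithin ℝ w (Dplus (n+1) i) x with hp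
      have h1 : (p (EuclideanSpace.single i 1)) ^ 2 ≤ ∑ j, (p (EuclideanSpace.single j 1)) ^ 2 :=
        Finset.single_le_sum (f := fun j => (p (EuclideanSpace.single j 1)) ^ 2)
          (fun j _ => sq_nonneg _) (Finset.mem_univ i)
      have hx1 : ‖x‖ < 1 := by simpa using hx.1
      have hx2 : 0 < x i := hx.2
      have hx3 : x i < 1 := (le_abs_self _).trans_lt ((PiLp.norm_apply_le x i).trans_lt hx1)
      set q := p (EuclideanSpace.single i 1)
      have h2 : (x i * q) ^ 2 ≤ q ^ 2 := by
        rw [mul_pow]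
        have : x i ^ 2 ≤ 1 := by nlinarith
        nlinarith [sq_nonneg q]
      nlinarith [sq_nonneg (w x + 2 * (x i * q))]
    have i1 : IntegrableOn (fun x => w x ^ 2) (Bplus (n+1) i) := int_of_cont (hwc.pow 2)
    have i2 : IntegrableOn (fun x => ‖fderivWithin ℝ w (Dplus (n+1) i) x‖ ^ 2) (Bplus (n+1) i) :=
      int_of_cont (hw'c.norm.pow 2)
    have h3 := setIntegral_mono_on ((i1.const_mul (1/2)).sub (i2.const_mul 2)) ?_
      (Bplus_isOpen _ _).measurableSet hpt
    · have h4 := h3.trans h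
      have h5 := integral_sub (i1.const_mul (1/2)) (i2.const_mul 2)
      rw [integral_const_mul, integral_const_mul] at h5
      have h6 := h5.symm.le.trans h4
      linarith
    · refine int_of_cont ?_
      refine ContinuousOn.add ?_ (hwc.mul (hwc.add (hic.mul hic')))
      refine continuousOn_finsetSum _ fun j _ => ?_
      refine (hw'c.clm_apply continuousOn_const).mul ?_
      by_cases hj : j = i
      · simp only [hj, if_true]; exact hwc.mul hic
      · simpa [hj] using continuousOn_const
  · intro j
    by_cases hj : j = i
    · simp only [hj, if_true]; exact hwc.mul hic
    · simpa [hj] using continuousOn_const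
  · intro j x hx
    by_cases hj : j = i
    · simpa [hj] using (hVd x hx).differentiableAt
    · simp [hj]
  · exact hwc.add (hic.mul hic')
  · intro x hx
    rw [Finset.sum_eq_single i]
    · simp only [if_true]
      rw [(hVd x hx).fderiv]
      simp
    · intro j _ hj
      simp [hj]
    · simp
  · intro x hx
    have : x i = 0 := hx.2
    simp [this]

lemma laplTh_cont {d : ℕ} {i : Fin d} {u : (EuclideanSpace ℝ (Fin d)) → ℝ} (hu : ContDiffOn ℝ 2 u (Dplus d i)) :
    ContinuousOn (laplTh d i u) (Dplus d i) := by
  unfold laplTh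
  refine continuousOn_finsetSum _ fun j _ => ?_
  have h := hu.continuousOn_iteratedFDerivWithin (m := 2) (by norm_num) (Dplus_udiff d i)
  exact (ContinuousMultilinearMap.apply ℝ (fun _ : Fin 2 => EuclideanSpace ℝ (Fin d)) ℝ
    ![EuclideanSpace.single j 1, EuclideanSpace.single j 1]).continuous.comp_continuousOn h

lemma diff_sub {d : ℕ} {i : Fin d} {u v : (EuclideanSpace ℝ (Fin d)) → ℝ} (hu : ContDiffOn ℝ 1 u (Dplus d i))
    (hv : ContDiffOn ℝ 1 v (Dplus d i)) {x : EuclideanSpace ℝ (Fin d)} (hx : x ∈ Dplus d i) :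
    fderivWithin ℝ (fun y => u y - v y) (Dplus d i) x =
      fderivWithin ℝ u (Dplus d i) x - fderivWithin ℝ v (Dplus d i) x :=
  fderivWithin_fun_sub (Dplus_udiff d i x hx) (hu.differentiableOn (by norm_num) x hx)
    (hv.differentiableOn (by norm_num) x hx)

lemma green_u (n : ℕ) (i : Fin (n+1)) (u w : (EuclideanSpace ℝ (Fin (n+1))) → ℝ)
    (hu : ContDiffOn ℝ 2 u (Dplus (n+1) i))
    (hw : ContDiffOn ℝ 1 w (Dplus (n+1) i))
    (hw0 : ∀ x ∈ Metric.sphere (0 : EuclideanSpace ℝ (Fin (n+1))) 1, 0 ≤ x i → w x = 0)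
    (hs : ∀ x ∈ Bprime (n+1) i, 0 ≤ w x * dNorm (n+1) i u x) :
    ∫ x in Bplus (n+1) i, ((∑ j, fderivWithin ℝ w (Dplus (n+1) i) x (EuclideanSpace.single j 1)
      * fderivWithin ℝ u (Dplus (n+1) i) x (EuclideanSpace.single j 1))
      + w x * laplTh (n+1) i u x) ≤ 0 := by
  have hu1 : ContDiffOn ℝ 1 (fderivWithin ℝ u (Dplus (n+1) i)) (Dplus (n+1) i) :=
    hu.fderivWithin (Dplus_udiff _ _) (by norm_num)
  have hd : ∀ x ∈ Bplus (n+1) i, HasFDerivAt (fderivWithin ℝ u (Dplus (n+1) i))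
      (fderivWithin ℝ (fderivWithin ℝ u (Dplus (n+1) i)) (Dplus (n+1) i) x) x := fun x hx =>
    ((hu1.differentiableOn (by norm_num)) x
      (Bplus_subset _ _ hx)).hasFDerivWithinAt.hasFDerivAt (Dplus_nhds hx)
  refine green n i w (laplTh (n+1) i u)
    (fun j x => fderivWithin ℝ u (Dplus (n+1) i) x (EuclideanSpace.single j 1)) hw hw0
    (fun j => hu1.continuousOn.clm_apply continuousOn_const) ?_ (laplTh_cont hu) ?_ hs
  · intro j x hx
    exact ((hd x hx).clm_apply (hasFDerivAt_const _ x)).differentiableAt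
  · intro x hx
    unfold laplTh
    refine Finset.sum_congr rfl fun j _ => ?_
    rw [((hd x hx).clm_apply (hasFDerivAt_const (EuclideanSpace.single j (1:ℝ)) x)).fderiv,
      iteratedFDerivWithin_two_apply' u (Dplus_udiff _ _) (Bplus_subset _ _ hx)]
    simp

lemma green_phi (n : ℕ) (i : Fin (n+1)) (u w : (EuclideanSpace ℝ (Fin (n+1))) → ℝ)
    (hu : ContDiffOn ℝ 1 u (Dplus (n+1) i))
    (hu2 : ContDiffOn ℝ 2 u (Bplus (n+1) i))
    (hh : ∀ x ∈ Bplus (n+1) i,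
        (∑ j : Fin (n+1), iteratedFDeriv ℝ 2 u x
          ![EuclideanSpace.single j 1, EuclideanSpace.single j 1]) = 0)
    (hw : ContDiffOn ℝ 1 w (Dplus (n+1) i))
    (hw0 : ∀ x ∈ Metric.sphere (0 : EuclideanSpace ℝ (Fin (n+1))) 1, 0 ≤ x i → w x = 0)
    (hs : ∀ x ∈ Bprime (n+1) i, 0 ≤ w x * dNorm (n+1) i u x) :
    ∫ x in Bplus (n+1) i, (∑ j, fderivWithin ℝ w (Dplus (n+1) i) x (EuclideanSpace.single j 1)
      * fderivWithin ℝ u (Dplus (n+1) i) x (EuclideanSpace.single j 1)) ≤ 0 := by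
  have huc : ContinuousOn (fderivWithin ℝ u (Dplus (n+1) i)) (Dplus (n+1) i) :=
    hu.continuousOn_fderivWithin (Dplus_udiff _ _) le_rfl
  have hd : ∀ x ∈ Bplus (n+1) i, HasFDerivAt (fderivWithin ℝ u (Dplus (n+1) i))
      (fderiv ℝ (fderiv ℝ u) x) x := by
    intro x hx
    have hx' := (Bplus_isOpen (n+1) i).mem_nhds hx
    have e : fderivWithin ℝ u (Dplus (n+1) i) =ᶠ[𝓝 x] fderiv ℝ u := by
      filter_upwards [hx'] with y hy
      exact fderivWithin_of_mem_nhds (Dplus_nhds hy)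
    have h1 : ContDiffAt ℝ 1 (fderiv ℝ u) x :=
      (hu2.contDiffAt hx').fderiv_right (by norm_num)
    exact (h1.differentiableAt (by norm_num)).hasFDerivAt.congr_of_eventuallyEq e
  have h := green n i w (fun _ => 0)
    (fun j x => fderivWithin ℝ u (Dplus (n+1) i) x (EuclideanSpace.single j 1)) hw hw0
    (fun j => huc.clm_apply continuousOn_const) ?_ continuousOn_const ?_ hs
  · simpa using h
  · intro j x hx
    exact ((hd x hx).clm_apply (hasFDerivAt_const _ x)).differentiableAt
  · intro x hx
    rw [← hh x hx]
    refine Finset.sum_congr rfl fun j _ => ?_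
    rw [((hd x hx).clm_apply (hasFDerivAt_const (EuclideanSpace.single j (1:ℝ)) x)).fderiv,
      iteratedFDeriv_two_apply]
    simp

lemma knorm_bound {d : ℕ} {i : Fin d} {g u v : (EuclideanSpace ℝ (Fin d)) → ℝ} (hu : ContDiffOn ℝ 2 u (Dplus d i))
    (hv : MemKth d i g v) :
    ∫ x in Bplus d i, (v x - u x) * laplTh d i u x ≤
      KnormTh d i g u * Real.sqrt (∫ x in Bplus d i, (v x - u x) ^ 2) := by
  have hb : ∀ v, MemKth d i g v → ∫ x in Bplus d i, (v x - u x) * laplTh d i u x ≤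
      Real.sqrt (∫ x in Bplus d i, (v x - u x) ^ 2) *
      Real.sqrt (∫ x in Bplus d i, (laplTh d i u x) ^ 2) := fun v hv =>
    cauchy (hv.1.sub hu.continuousOn) (laplTh_cont hu)
  have hA : 0 ≤ ∫ x in Bplus d i, (v x - u x) ^ 2 := integral_nonneg fun x => sq_nonneg _
  by_cases h0 : ∫ x in Bplus d i, (v x - u x) ^ 2 = 0
  · have := hb v hv
    rw [h0] at this ⊢
    simpa using this
  · have hpos : 0 < Real.sqrt (∫ x in Bplus d i, (v x - u x) ^ 2) :=
      Real.sqrt_pos.2 (lt_of_le_of_ne hA (Ne.symm h0))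
    rw [← div_le_iff₀ hpos]
    refine le_trans ?_ (le_max_right _ _)
    refine le_csSup ⟨Real.sqrt (∫ x in Bplus d i, (laplTh d i u x) ^ 2), ?_⟩ ⟨v, hv, h0, rfl⟩
    rintro r ⟨v', hv', h0', rfl⟩
    have hA' : 0 ≤ ∫ x in Bplus d i, (v' x - u x) ^ 2 := integral_nonneg fun x => sq_nonneg _
    have hpos' : 0 < Real.sqrt (∫ x in Bplus d i, (v' x - u x) ^ 2) :=
      Real.sqrt_pos.2 (lt_of_le_of_ne hA' (Ne.symm h0'))
    rw [div_le_iff₀ hpos', mul_comm]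
    exact hb v' hv'

/-- **Constrained Łojasiewicz inequality (exponent 1/2) for the thin-obstacle problem.**
There is `C > 0`, depending only on `d`, such that for every boundary datum `g`
(continuous, nonnegative on `B₁'`), every solution `φ` of the thin-obstacle problem with
datum `g`, and every `u ∈ K_th` of class `C²` on the closed half-ball satisfying the
Signorini conditions `∂u/∂x_d ≤ 0` and `u ∂u/∂x_d = 0` on `B₁'`:
`F_th(u) ≥ F_th(φ)` and `(F_th(u) - F_th(φ))^{1/2} ≤ C ‖∇F_th(u)‖_K`. -/
theorem constrained_loja_thin_obstacle (d : ℕ) (hd : 2 ≤ d) :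
    ∃ C > (0:ℝ), ∀ (i : Fin d) (g φ : EuclideanSpace ℝ (Fin d) → ℝ),
      ContinuousOn g (Dplus d i) →
      (∀ x ∈ Bprime d i, 0 ≤ g x) →
      MemKth d i g φ →
      ContDiffOn ℝ 1 φ (Dplus d i) →
      ContDiffOn ℝ 2 φ (Bplus d i) →
      (∀ x ∈ Bplus d i,
        (∑ j : Fin d, iteratedFDeriv ℝ 2 φ x
          ![EuclideanSpace.single j 1, EuclideanSpace.single j 1]) = 0) →
      (∀ x ∈ Bprime d i, dNorm d i φ x ≤ 0 ∧ φ x * dNorm d i φ x = 0) →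
      ∀ u : EuclideanSpace ℝ (Fin d) → ℝ, MemKth d i g u →
        ContDiffOn ℝ 2 u (Dplus d i) →
        (∀ x ∈ Bprime d i, dNorm d i u x ≤ 0 ∧ u x * dNorm d i u x = 0) →
        Fth d i φ ≤ Fth d i u ∧ Real.sqrt (Fth d i u - Fth d i φ) ≤ C * KnormTh d i g u := by
  refine ⟨2, by norm_num, ?_⟩
  intro i g φ hg hg0 hφK hφ1 hφ2 hφh hφs u huK hu hus
  obtain ⟨n, rfl⟩ : ∃ n, d = n + 1 := ⟨d - 1, by omega⟩
  have hu1 : ContDiffOn ℝ 1 u (Dplus (n+1) i) := hu.of_le (by norm_num)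
  set D := Dplus (n+1) i with hD
  set B := Bplus (n+1) i with hB
  have hBm : MeasurableSet B := (Bplus_isOpen _ _).measurableSet
  have hu'c : ContinuousOn (fderivWithin ℝ u D) D :=
    hu1.continuousOn_fderivWithin (Dplus_udiff _ _) le_rfl
  have hφ'c : ContinuousOn (fderivWithin ℝ φ D) D :=
    hφ1.continuousOn_fderivWithin (Dplus_udiff _ _) le_rfl
  have hw1 : ContDiffOn ℝ 1 (fun x => u x - φ x) D := hu1.sub hφ1
  have hw2 : ContDiffOn ℝ 1 (fun x => φ x - u x) D := hφ1.sub hu1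
  have hw'c : ContinuousOn (fderivWithin ℝ (fun x => u x - φ x) D) D :=
    hw1.continuousOn_fderivWithin (Dplus_udiff _ _) le_rfl
  have hz1 : ∀ x ∈ Metric.sphere (0 : EuclideanSpace ℝ (Fin (n+1))) 1, 0 ≤ x i →
      u x - φ x = 0 := by
    intro x hx hxi
    rw [huK.2.2 x hx hxi, hφK.2.2 x hx hxi, sub_self]
  have hz2 : ∀ x ∈ Metric.sphere (0 : EuclideanSpace ℝ (Fin (n+1))) 1, 0 ≤ x i →
      φ x - u x = 0 := by
    intro x hx hxi
    rw [huK.2.2 x hx hxi, hφK.2.2 x hx hxi, sub_self]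
  -- Poincaré
  have hP := poincare n i _ hw1 hz1
  -- the two Green inequalities
  have hG1 := green_phi n i φ _ hφ1 hφ2 hφh hw2 hz2 (by
    intro x hx
    have h1 := hφs x hx
    have h2 := huK.2.1 x hx
    nlinarith)
  have hG2 := green_u n i u _ hu hw1 hz1 (by
    intro x hx
    have h1 := hus x hx
    have h2 := hφK.2.1 x hx
    nlinarith)
  have hK := knorm_bound hu hφK
  have hK0 : 0 ≤ KnormTh (n+1) i g u := le_max_left _ _
  rw [← hD, ← hB] at hP hG1 hG2
  rw [← hB] at hK
  unfold Fth
  rw [← hD, ← hB]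
  have iu : IntegrableOn (fun x => ‖fderivWithin ℝ u D x‖ ^ 2) B := int_of_cont (hu'c.norm.pow 2)
  have iφ : IntegrableOn (fun x => ‖fderivWithin ℝ φ D x‖ ^ 2) B := int_of_cont (hφ'c.norm.pow 2)
  have iw : IntegrableOn (fun x => ‖fderivWithin ℝ (fun x => u x - φ x) D x‖ ^ 2) B :=
    int_of_cont (hw'c.norm.pow 2)
  have il : IntegrableOn (fun x => (φ x - u x) * laplTh (n+1) i u x) B :=
    int_of_cont ((hφK.1.sub huK.1).mul (laplTh_cont hu))
  -- rewrite the Green integrands through the energy densities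
  have e1 : ∀ x ∈ B, (∑ j, fderivWithin ℝ (fun x => φ x - u x) D x (EuclideanSpace.single j 1)
      * fderivWithin ℝ φ D x (EuclideanSpace.single j 1)) =
      (1/2) * (‖fderivWithin ℝ φ D x‖ ^ 2 - ‖fderivWithin ℝ u D x‖ ^ 2
        + ‖fderivWithin ℝ (fun x => u x - φ x) D x‖ ^ 2) := by
    intro x hx
    rw [diff_sub hφ1 hu1 (Bplus_subset _ _ hx), diff_sub hu1 hφ1 (Bplus_subset _ _ hx),
      normsq, normsq, normsq, ← Finset.sum_sub_distrib, ← Finset.sum_add_distrib, Finset.mul_sum]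
    refine Finset.sum_congr rfl fun j _ => ?_
    simp only [sub_apply]
    ring
  have e2 : ∀ x ∈ B, ((∑ j, fderivWithin ℝ (fun x => u x - φ x) D x (EuclideanSpace.single j 1)
      * fderivWithin ℝ u D x (EuclideanSpace.single j 1)) + (u x - φ x) * laplTh (n+1) i u x) =
      (1/2) * (‖fderivWithin ℝ u D x‖ ^ 2 - ‖fderivWithin ℝ φ D x‖ ^ 2
        + ‖fderivWithin ℝ (fun x => u x - φ x) D x‖ ^ 2)
      - (φ x - u x) * laplTh (n+1) i u x := by
    intro x hx
    have : (∑ j, fderivWithin ℝ (fun x => u x - φ x) D x (EuclideanSpace.single j 1)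
      * fderivWithin ℝ u D x (EuclideanSpace.single j 1)) =
      (1/2) * (‖fderivWithin ℝ u D x‖ ^ 2 - ‖fderivWithin ℝ φ D x‖ ^ 2
        + ‖fderivWithin ℝ (fun x => u x - φ x) D x‖ ^ 2) := by
      rw [diff_sub hu1 hφ1 (Bplus_subset _ _ hx),
        normsq, normsq, normsq, ← Finset.sum_sub_distrib, ← Finset.sum_add_distrib, Finset.mul_sum]
      refine Finset.sum_congr rfl fun j _ => ?_
      simp only [sub_apply]
      ring
    rw [this]; ring
  rw [setIntegral_congr_fun hBm e1] at hG1
  rw [setIntegral_congr_fun hBm e2] at hG2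
  have s1 := integral_add (iφ.sub iu) iw
  have s2 := integral_add (iu.sub iφ) iw
  have s3 := integral_sub (((iu.sub iφ).add iw).const_mul (1/2)) il
  have s4 := integral_sub iφ iu
  have s5 := integral_sub iu iφ
  simp only [Pi.sub_apply, Pi.add_apply] at s1 s2 s3
  rw [integral_const_mul] at hG1 s3
  rw [s1, s4] at hG1
  rw [s3, s2, s5] at hG2
  have hP0 : 0 ≤ ∫ x in B, ‖fderivWithin ℝ (fun x => u x - φ x) D x‖ ^ 2 :=
    integral_nonneg fun x => sq_nonneg _
  have hsymm : ∫ x in B, (φ x - u x) ^ 2 = ∫ x in B, (u x - φ x) ^ 2 := by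
    congr 1; ext x; ring
  rw [hsymm] at hK
  have hA0 : 0 ≤ ∫ x in B, (u x - φ x) ^ 2 := integral_nonneg fun x => sq_nonneg _
  set A := ∫ x in B, (u x - φ x) ^ 2
  set P := ∫ x in B, ‖fderivWithin ℝ (fun x => u x - φ x) D x‖ ^ 2
  set a := ∫ x in B, ‖fderivWithin ℝ u D x‖ ^ 2
  set b := ∫ x in B, ‖fderivWithin ℝ φ D x‖ ^ 2
  set K := KnormTh (n+1) i g u
  refine ⟨by linarith, ?_⟩
  refine Real.sqrt_le_iff.2 ⟨by positivity, ?_⟩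
  have hsA : Real.sqrt A ^ 2 = A := Real.sq_sqrt hA0
  nlinarith [sq_nonneg (Real.sqrt A - 4 * K)]
end
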